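/- A finite connected simple graph G is a convex geometry with respect to the m³-convexity if and only if G is weakly polarizable, i.e., G contains no induced subgraph isomorphic to a hole, the house, the domino, or the A. -/

import Mathlib

open SimpleGraph

variable {V : Type*} {W : Type*}

/-- The convex hull of `S`: the smallest convex set containing `S`. -/
def chull (Cvx : Set V → Prop) (S : Set V) : Set V := ⋂₀ {T | S ⊆ T ∧ Cvx T}

/-- The set of extreme vertices of `S`. -/
def extremeSet (Cvx : Set V → Prop) (S : Set V) : Set V := {x | x ∈ S ∧ Cvx (S \ {x})}

/-- A convexity is a convex geometry if every convex set is the convex hull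
of its extreme vertices. -/
def IsConvexGeometry (Cvx : Set V → Prop) : Prop :=
  ∀ S : Set V, Cvx S → S = chull Cvx (extremeSet Cvx S)

/-- Convexity induced by a system of p-walks: `S` is convex iff every vertex
lying on a p-walk between two vertices of `S` belongs to `S`. -/
def PConvex (G : SimpleGraph V) (P : ∀ ⦃u v : V⦄, G.Walk u v → Prop) (S : Set V) : Prop :=
  ∀ ⦃u v : V⦄, u ∈ S → v ∈ S → ∀ w : G.Walk u v, P w → ∀ x ∈ w.support, x ∈ S

/-- `x` and `y` appear consecutively (in either order) in the list `l`. -/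
def consecIn (l : List V) (x y : V) : Prop := [x, y] <:+: l ∨ [y, x] <:+: l

/-- An induced path: a path such that the only edges of `G` between its vertices
are the consecutive ones. -/
def IsInducedPathW (G : SimpleGraph V) {u v : V} (w : G.Walk u v) : Prop :=
  w.IsPath ∧ ∀ x ∈ w.support, ∀ y ∈ w.support, G.Adj x y → consecIn w.support x y

/-- An induced cycle: a cycle such that the only edges of `G` between its vertices
are the consecutive (cyclically) ones. -/
def IsInducedCycleW (G : SimpleGraph V) {u : V} (w : G.Walk u u) : Prop :=
  w.IsCycle ∧ ∀ x ∈ w.support, ∀ y ∈ w.support, G.Adj x y → consecIn w.support x y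

/-- A graph is chordal if it has no induced cycle of length at least 4. -/
def Chordal (G : SimpleGraph V) : Prop :=
  ¬ ∃ (u : V) (w : G.Walk u u), IsInducedCycleW G w ∧ 4 ≤ w.length

/-- The cycle `w` has an odd chord: an edge of `G` joining two vertices of the cycle
whose distance along the cycle is odd and greater than 1. -/
def HasOddChord (G : SimpleGraph V) {u : V} (w : G.Walk u u) : Prop :=
  ∃ i j : ℕ, ∃ hi : i < w.support.length, ∃ hj : j < w.support.length, i < j ∧
    G.Adj (w.support.get ⟨i, hi⟩) (w.support.get ⟨j, hj⟩) ∧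
    Odd (min (j - i) (w.length - (j - i))) ∧ 1 < min (j - i) (w.length - (j - i))

/-- A graph is strongly chordal if it is chordal and every even cycle of length
at least 6 has an odd chord. -/
def StronglyChordal (G : SimpleGraph V) : Prop :=
  Chordal G ∧ ∀ (u : V) (w : G.Walk u u), w.IsCycle → Even w.length → 6 ≤ w.length →
    HasOddChord G w

/-- Closed neighborhood `N[v]`. -/
def closedNbhd (G : SimpleGraph V) (v : V) : Set V := insert v (G.neighborSet v)

/-- A vertex is simple if the closed neighborhoods of its closed neighbors form a
family totally ordered by inclusion. -/
def SimpleVtx (G : SimpleGraph V) (v : V) : Prop :=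
  ∀ u ∈ closedNbhd G v, ∀ w ∈ closedNbhd G v,
    closedNbhd G u ⊆ closedNbhd G w ∨ closedNbhd G w ⊆ closedNbhd G u

/-- A vertex is simplicial if its closed neighborhood is a clique. -/
def SimplicialVtx (G : SimpleGraph V) (v : V) : Prop :=
  G.IsClique (closedNbhd G v)

/-- An even-chorded path: a path with no odd chord and such that no endpoint
lies in a chord. -/
def IsEvenChorded (G : SimpleGraph V) {u v : V} (w : G.Walk u v) : Prop :=
  w.IsPath ∧ ∀ i j : ℕ, ∀ hi : i < w.support.length, ∀ hj : j < w.support.length,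
    i + 1 < j → G.Adj (w.support.get ⟨i, hi⟩) (w.support.get ⟨j, hj⟩) →
      Even (j - i) ∧ 0 < i ∧ j < w.support.length - 1

/-- A tolled walk `u₀u₁…u_k`: `u₀uᵢ ∈ E(G)` implies `i = 1` and `u_ju_k ∈ E(G)`
implies `j = k - 1`. -/
def IsTolledWalk (G : SimpleGraph V) {u v : V} (w : G.Walk u v) : Prop :=
  ∀ i : ℕ, ∀ hi : i < w.support.length,
    (G.Adj u (w.support.get ⟨i, hi⟩) → i = 1) ∧
    (G.Adj (w.support.get ⟨i, hi⟩) v → i = w.support.length - 2)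

/-- A weakly toll walk `u₀u₁…u_k`: `u₀uᵢ ∈ E(G)` implies `uᵢ = u₁` and
`u_ju_k ∈ E(G)` implies `u_j = u_{k-1}`. -/
def IsWeaklyTollWalk (G : SimpleGraph V) {u v : V} (w : G.Walk u v) : Prop :=
  ∀ i : ℕ, ∀ hi : i < w.support.length,
    (G.Adj u (w.support.get ⟨i, hi⟩) → w.support.get ⟨i, hi⟩ = w.support.getD 1 u) ∧
    (G.Adj (w.support.get ⟨i, hi⟩) v → w.support.get ⟨i, hi⟩ = w.support.getD (w.support.length - 2) v)

/-- An interval graph: vertices can be assigned nonempty closed real intervals so that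
distinct vertices are adjacent iff the intervals intersect. -/
def IsIntervalGraph (G : SimpleGraph V) : Prop :=
  ∃ a b : V → ℝ, (∀ v, a v ≤ b v) ∧
    ∀ u v : V, u ≠ v →
      (G.Adj u v ↔ (Set.Icc (a u) (b u) ∩ Set.Icc (a v) (b v)).Nonempty)

/-- A proper interval graph: an interval model in which no interval properly
contains another. -/
def IsProperIntervalGraph (G : SimpleGraph V) : Prop :=
  ∃ a b : V → ℝ, (∀ v, a v ≤ b v) ∧
    (∀ u v : V, u ≠ v →
      (G.Adj u v ↔ (Set.Icc (a u) (b u) ∩ Set.Icc (a v) (b v)).Nonempty)) ∧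
    ∀ u v : V, ¬ (Set.Icc (a u) (b u) ⊂ Set.Icc (a v) (b v))

/-- An end vertex: some interval model in which its interval is an end interval. -/
def IsEndVertex (G : SimpleGraph V) (x : V) : Prop :=
  ∃ a b : V → ℝ, (∀ v, a v ≤ b v) ∧
    (∀ u v : V, u ≠ v →
      (G.Adj u v ↔ (Set.Icc (a u) (b u) ∩ Set.Icc (a v) (b v)).Nonempty)) ∧
    ((∀ v, a x ≤ a v) ∨ (∀ v, b v ≤ b x))

/-- `G` contains an induced subgraph isomorphic to `H`. -/
def HasInducedSubgraphIso (G : SimpleGraph V) (H : SimpleGraph W) : Prop :=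
  ∃ f : W ↪ V, ∀ a b : W, G.Adj (f a) (f b) ↔ H.Adj a b

def gemGraph : SimpleGraph (Fin 5) :=
  SimpleGraph.fromRel fun a b =>
    ((a : ℕ), (b : ℕ)) ∈ [(0,1),(1,2),(2,3),(4,0),(4,1),(4,2),(4,3)]

def houseGraph : SimpleGraph (Fin 5) :=
  SimpleGraph.fromRel fun a b =>
    ((a : ℕ), (b : ℕ)) ∈ [(0,1),(1,2),(2,3),(0,3),(0,4),(1,4)]

def dominoGraph : SimpleGraph (Fin 6) :=
  SimpleGraph.fromRel fun a b =>
    ((a : ℕ), (b : ℕ)) ∈ [(0,1),(1,2),(2,3),(0,3),(2,4),(4,5),(3,5)]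

def aGraph : SimpleGraph (Fin 6) :=
  SimpleGraph.fromRel fun a b =>
    ((a : ℕ), (b : ℕ)) ∈ [(0,1),(1,2),(2,3),(0,3),(2,4),(3,5)]

/-- A triangle path: a path such that any two of its vertices at distance
greater than 2 along the path are non-adjacent in `G`. -/
def IsTrianglePath (G : SimpleGraph V) {u v : V} (w : G.Walk u v) : Prop :=
  w.IsPath ∧ ∀ i j : ℕ, ∀ hi : i < w.support.length, ∀ hj : j < w.support.length,
    i + 2 < j → ¬ G.Adj (w.support.get ⟨i, hi⟩) (w.support.get ⟨j, hj⟩)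

/-- `S` is `H`-free convex. -/
def HFreeConvex [Fintype W] (G : SimpleGraph V) (H : SimpleGraph W) (S : Set V) : Prop :=
  ∀ (S' : Finset V), ↑S' ⊆ S → S'.card = Fintype.card W - 1 →
    ∀ x : V, Nonempty ((G.induce (↑S' ∪ {x} : Set V)) ≃g H) → x ∈ S

/-- `a b c d` is an induced path on four vertices of `G`. -/
def InducedP4 (G : SimpleGraph V) (a b c d : V) : Prop :=
  G.Adj a b ∧ G.Adj b c ∧ G.Adj c d ∧ ¬ G.Adj a c ∧ ¬ G.Adj a d ∧ ¬ G.Adj b d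

/-- Every connected component of `G` is a star. -/
def StarForest (G : SimpleGraph V) : Prop :=
  ∀ v : V, ∃ c : V, G.Reachable v c ∧ (∀ x, G.Reachable c x → x ≠ c → G.Adj c x) ∧
    ∀ x y, G.Adj c x → G.Adj c y → ¬ G.Adj x y

/-- An induced `n`-gem in `G`: `x 0, …, x n` is an induced path and `u` is adjacent
to all of them, the whole forming an induced subgraph of `G`. -/
def IsInducedNGem (G : SimpleGraph V) (n : ℕ) (x : Fin (n + 1) → V) (u : V) : Prop :=
  Function.Injective x ∧ (∀ i, x i ≠ u) ∧
  (∀ i j, G.Adj (x i) (x j) ↔ ((i : ℕ) + 1 = (j : ℕ) ∨ (j : ℕ) + 1 = (i : ℕ))) ∧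
  (∀ i, G.Adj u (x i))

/-- The induced `n`-gem is solved: there is an induced path of length 3 in `G`
connecting `x 0` and `x n` that avoids `u`. -/
def GemSolved (G : SimpleGraph V) (n : ℕ) (x : Fin (n + 1) → V) (u : V) : Prop :=
  ∃ w : G.Walk (x 0) (x (Fin.last n)), IsInducedPathW G w ∧ w.length = 3 ∧ u ∉ w.support

/-!
An induced path of length at least three through `x` contains an induced path on four vertices
with `x` in its interior, unless `x` is an end. So the extreme vertices of a convex set are its
semisimplicial vertices, those that are interior to no such four-vertex path, and a graph is a
convex geometry as soon as every proper convex set of every induced subgraph misses a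
semisimplicial vertex.

Suppose that `G` is weakly polarizable. If it is not chordal, it has an induced 4-cycle, that is,
a join of two nontrivial co-connected sets. Take a maximal join. As there is no house, an outside
vertex that splits one side has no neighbour on the other side, so that vertices splitting the two
sides yield a domino or an `A`. Hence one of the sides is a proper nontrivial module, and a
semisimplicial vertex is found by induction in the module and in the quotient. If `G` is chordal,
the interior vertices of an induced path `a x b c` lie on an induced path between two simplicial
vertices, one found in the component of `a` outside `N[b]` and the other in the component of `c`
outside `N[x]`.

Conversely, let `G` be a convex geometry. The extreme vertices of a hull belong to the generating
set. Every vertex of a hole or of a domino, and every vertex of a house but its roof, is interior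
to a four-vertex path of that subgraph, which rules these graphs out. If there is an `A`, restrict
to a minimal convex set containing one. Its extreme vertices are then the two feet `w`, `w'` of
every `A`. In a maximal join extending the 4-cycle of an `A`, remove the nonneighbours of `w` from
the side split by `w`, and the nonneighbours of `w'` from the other side. What remains turns out
to be convex, contains both feet and is proper, a contradiction.
-/

section InducedWalks

variable {G : SimpleGraph V} {u v : V}

theorem isInducedPathW_iff {w : G.Walk u v} : IsInducedPathW G w ↔ w.IsPath ∧ w.IsChordless := by
  simp only [IsInducedPathW, consecIn, Walk.infix_support_iff_mem_edges,
    Walk.isChordless_iff_forall_mem_edges]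
  grind

theorem isInducedCycleW_iff {w : G.Walk u u} :
    IsInducedCycleW G w ↔ w.IsCycle ∧ w.IsChordless := by
  simp only [IsInducedCycleW, consecIn, Walk.infix_support_iff_mem_edges,
    Walk.isChordless_iff_forall_mem_edges]
  grind

theorem IsInducedPathW.isPath {w : G.Walk u v} (h : IsInducedPathW G w) : w.IsPath := h.1

theorem IsInducedPathW.isChordless {w : G.Walk u v} (h : IsInducedPathW G w) : w.IsChordless :=
  (isInducedPathW_iff.1 h).2

theorem IsInducedPathW.reverse {w : G.Walk u v} (h : IsInducedPathW G w) :
    IsInducedPathW G w.reverse := by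
  rw [isInducedPathW_iff, Walk.isChordless_iff_forall_mem_edges] at *
  simpa using h

theorem isChordless_map_iff {H : SimpleGraph W} {w : G.Walk u v} (f : G ↪g H) :
    (w.map f.toHom).IsChordless ↔ w.IsChordless := by
  simp only [Walk.isChordless_iff_forall_mem_edges, Walk.support_map, Walk.edges_map]
  constructor
  · intro h x y hx hy hxy
    exact (List.mem_map_of_injective (Sym2.map.injective f.injective)).1
      (h (List.mem_map_of_mem hx) (List.mem_map_of_mem hy) (f.map_adj_iff.2 hxy))
  · intro h x' y' hx' hy' hxy
    obtain ⟨x, hx, rfl⟩ := List.mem_map.1 hx'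
    obtain ⟨y, hy, rfl⟩ := List.mem_map.1 hy'
    exact List.mem_map_of_mem (h hx hy (f.map_adj_iff.1 hxy))

theorem isInducedPathW_map_iff {H : SimpleGraph W} {w : G.Walk u v} (f : G ↪g H) :
    IsInducedPathW H (w.map f.toHom) ↔ IsInducedPathW G w := by
  rw [isInducedPathW_iff, isInducedPathW_iff, isChordless_map_iff,
    Walk.isPath_map_iff_of_injective f.injective]

theorem IsInducedCycleW.map {H : SimpleGraph W} {w : G.Walk u u} (f : G ↪g H)
    (h : IsInducedCycleW G w) : IsInducedCycleW H (w.map f.toHom) :=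
  isInducedCycleW_iff.2
    ⟨h.1.map f.injective, (isChordless_map_iff f).2 (isInducedCycleW_iff.1 h).2⟩

theorem IsInducedPathW.adj_getVert_iff {w : G.Walk u v} (h : IsInducedPathW G w) {i j : ℕ}
    (hi : i ≤ w.length) (hj : j ≤ w.length) :
    G.Adj (w.getVert i) (w.getVert j) ↔ j = i + 1 ∨ i = j + 1 := by
  constructor
  · intro hij
    obtain ⟨k, hk, hkij⟩ := (w.mk_mem_edges_iff_exists).1
      (h.isChordless.mem_edges (w.getVert_mem_support i) (w.getVert_mem_support j) hij)
    have inj := h.isPath.getVert_injOn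
    rcases Sym2.eq_iff.1 hkij with ⟨hki, hkj⟩ | ⟨hki, hkj⟩
    · have := inj (by grind) (by grind) hki
      have := inj (by grind) (by grind) hkj
      grind
    · have := inj (by grind) (by grind) hki
      have := inj (by grind) (by grind) hkj
      grind
  · rintro (rfl | rfl)
    · exact w.adj_getVert_succ hj
    · exact (w.adj_getVert_succ hi).symm

theorem IsInducedCycleW.adj_getVert_iff {w : G.Walk u u} (h : IsInducedCycleW G w) {i j : ℕ}
    (hi : 1 ≤ i) (hij : i < j) (hj : j ≤ w.length) :
    G.Adj (w.getVert i) (w.getVert j) ↔ j = i + 1 ∨ i = 1 ∧ j = w.length := by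
  constructor
  · intro hadj
    obtain ⟨k, hk, hkij⟩ := (w.mk_mem_edges_iff_exists).1 ((isInducedCycleW_iff.1 h).2.mem_edges
      (w.getVert_mem_support i) (w.getVert_mem_support j) hadj)
    have inj := h.1.getVert_injOn
    have closing : w.getVert 0 = w.getVert w.length := by simp
    rcases Nat.eq_zero_or_pos k with rfl | hk'
    · rw [closing] at hkij
      rcases Sym2.eq_iff.1 hkij with ⟨hki, -⟩ | ⟨hki, hkj⟩
      · have := inj (by grind) (by grind) hki
        grind
      · have := inj (by grind) (by grind) hki
        have := inj (by grind) (by grind) hkj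
        grind
    · rcases Sym2.eq_iff.1 hkij with ⟨hki, hkj⟩ | ⟨hki, hkj⟩
      · have := inj (by grind) (by grind) hki
        have := inj (by grind) (by grind) hkj
        grind
      · have := inj (by grind) (by grind) hki
        have := inj (by grind) (by grind) hkj
        grind
  · rintro (rfl | ⟨rfl, rfl⟩)
    · exact w.adj_getVert_succ hj
    · simpa using (w.adj_getVert_succ (i := 0) (by omega)).symm

theorem InducedP4.symm {a b c d : V} (h : InducedP4 G a b c d) : InducedP4 G d c b a :=
  ⟨h.2.2.1.symm, h.2.1.symm, h.1.symm, fun e => h.2.2.2.2.2 e.symm, fun e => h.2.2.2.2.1 e.symm,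
    fun e => h.2.2.2.1 e.symm⟩

theorem InducedP4.exists_isInducedPathW {a b c d : V} (h : InducedP4 G a b c d) :
    ∃ w : G.Walk a d, IsInducedPathW G w ∧ w.length = 3 ∧ w.support = [a, b, c, d] := by
  obtain ⟨hab, hbc, hcd, hac, had, hbd⟩ := h
  refine ⟨.cons hab (.cons hbc (.cons hcd .nil)), ?_, rfl, rfl⟩
  rw [isInducedPathW_iff, Walk.isChordless_iff_forall_mem_edges]
  simp only [Walk.cons_isPath_iff, Walk.IsPath.nil, Walk.support_cons, Walk.support_nil,
    Walk.edges_cons, Walk.edges_nil, List.mem_cons, Sym2.eq_iff]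
  grind [G.ne_of_adj, G.adj_comm]

theorem IsInducedPathW.inducedP4_getVert {w : G.Walk u v} (h : IsInducedPathW G w) {i : ℕ}
    (hi : i + 3 ≤ w.length) :
    InducedP4 G (w.getVert i) (w.getVert (i + 1)) (w.getVert (i + 2)) (w.getVert (i + 3)) := by
  have hadj {j k : ℕ} (hj : j ≤ i + 3) (hk : k ≤ i + 3) :=
    h.adj_getVert_iff (hj.trans hi) (hk.trans hi)
  simp only [InducedP4]
  refine ⟨?_, ?_, ?_, ?_, ?_, ?_⟩ <;> rw [hadj] <;> omega

theorem IsInducedPathW.exists_inducedP4 {w : G.Walk u v} (h : IsInducedPathW G w)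
    (hlen : 3 ≤ w.length) {x : V} (hx : x ∈ w.support) (hxu : x ≠ u) (hxv : x ≠ v) :
    ∃ a ∈ w.support, ∃ b ∈ w.support, ∃ c ∈ w.support, InducedP4 G a x b c := by
  obtain ⟨i, rfl, hi⟩ := Walk.mem_support_iff_exists_getVert.1 hx
  have hi0 : i ≠ 0 := by rintro rfl; simp at hxu
  have hin : i ≠ w.length := by rintro rfl; simp at hxv
  have mem := w.getVert_mem_support
  by_cases hi2 : i + 2 ≤ w.length
  · obtain ⟨k, rfl⟩ := Nat.exists_eq_add_of_le' (Nat.one_le_iff_ne_zero.2 hi0)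
    exact ⟨_, mem _, _, mem _, _, mem _, h.inducedP4_getVert hi2⟩
  · obtain ⟨k, rfl⟩ := Nat.exists_eq_add_of_le' (show 2 ≤ i by omega)
    exact ⟨_, mem _, _, mem _, _, mem _, (h.inducedP4_getVert (by omega)).symm⟩

theorem isInducedPathW_of_length_eq_dist {w : G.Walk u v} (h : w.length = G.dist u v) :
    IsInducedPathW G w := by
  refine isInducedPathW_iff.2 ⟨w.isPath_of_length_eq_dist h, ?_⟩
  have dist_getVert {i : ℕ} (hi : i ≤ w.length) : G.dist u (w.getVert i) = i := by
    rw [← length_eq_dist_of_subwalk h (w.isSubwalk_take i), Walk.take_length, min_eq_left hi]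
  rw [Walk.isChordless_iff_forall_mem_edges]
  intro x y hx hy hxy
  obtain ⟨i, rfl, hi⟩ := Walk.mem_support_iff_exists_getVert.1 hx
  obtain ⟨j, rfl, hj⟩ := Walk.mem_support_iff_exists_getVert.1 hy
  rw [Walk.mk_mem_edges_iff_exists]
  rcases hxy.diff_dist_adj (u := u) with hd | hd | hd <;>
    rw [dist_getVert hi, dist_getVert hj] at hd
  · exact absurd (hd ▸ hxy) (G.irrefl)
  · exact ⟨i, by omega, by rw [hd]⟩
  · have : i ≠ j := by rintro rfl; exact G.irrefl hxy
    exact ⟨j, by omega, by rw [show j + 1 = i by omega, Sym2.eq_swap]⟩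

theorem exists_isInducedPathW_support_subset (w : G.Walk u v) :
    ∃ q : G.Walk u v, IsInducedPathW G q ∧ q.support ⊆ w.support := by
  obtain ⟨p, hp⟩ := (w.connected_induce_support.preconnected ⟨u, w.start_mem_support⟩
    ⟨v, w.end_mem_support⟩).exists_walk_length_eq_dist
  refine ⟨p.map (Embedding.induce _).toHom,
    (isInducedPathW_map_iff _).2 (isInducedPathW_of_length_eq_dist hp), fun y hy => ?_⟩
  obtain ⟨z, -, rfl⟩ := List.mem_map.1 (Walk.support_map _ p ▸ hy)
  exact z.2

theorem IsInducedCycleW.rotate [DecidableEq V] {w : G.Walk u u} (h : IsInducedCycleW G w) {x : V}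
    (hx : x ∈ w.support) : IsInducedCycleW G (w.rotate x hx) := by
  rw [isInducedCycleW_iff, Walk.isChordless_iff_forall_mem_edges] at *
  refine ⟨h.1.rotate hx, fun y z hy hz hyz => ?_⟩
  rw [Walk.mem_support_rotate_iff] at hy hz
  exact (w.rotate_edges x hx).mem_iff.2 (h.2 hy hz hyz)

theorem IsInducedCycleW.exists_inducedP4 {w : G.Walk u u} (h : IsInducedCycleW G w)
    (hlen : 5 ≤ w.length) {x : V} (hx : x ∈ w.support) :
    ∃ a ∈ w.support, ∃ b ∈ w.support, ∃ c ∈ w.support, InducedP4 G a x b c := by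
  classical
  set r := w.rotate x hx
  have hrlen : r.length = w.length := w.length_rotate x hx
  have mem (i : ℕ) : r.getVert i ∈ w.support :=
    (w.mem_support_rotate_iff x hx).1 (r.getVert_mem_support i)
  have hcyc : IsInducedCycleW G r := h.rotate hx
  have hadj {i j : ℕ} (hi : 1 ≤ i) (hij : i < j) (hj : j ≤ r.length) :=
    hcyc.adj_getVert_iff hi hij hj
  have hend : r.getVert r.length = x := r.getVert_length
  refine ⟨_, mem (r.length - 1), _, mem 1, _, mem 2, ?_⟩
  suffices InducedP4 G (r.getVert (r.length - 1)) (r.getVert r.length) (r.getVert 1)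
      (r.getVert 2) by rwa [hend] at this
  rw [InducedP4, G.adj_comm (r.getVert r.length), G.adj_comm (r.getVert r.length),
    G.adj_comm (r.getVert (r.length - 1)) (r.getVert 1),
    G.adj_comm (r.getVert (r.length - 1)) (r.getVert 2)]
  refine ⟨?_, ?_, ?_, ?_, ?_, ?_⟩ <;> rw [hadj] <;> omega

end InducedWalks

section CyclesThroughAnEdge

variable {G : SimpleGraph V} {x y u v : V}

theorem exists_isInducedCycleW_cons (hxy : G.Adj x y) (w : G.Walk x y) (hw : s(x, y) ∉ w.edges) :
    ∃ q : G.Walk x y, IsInducedCycleW G (.cons hxy.symm q) ∧ q.support ⊆ w.support := by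
  obtain ⟨q, hq, hqw⟩ := exists_isInducedPathW_support_subset (w.toDeleteEdge s(x, y) hw)
  have hle : G.deleteEdges {s(x, y)} ≤ G := G.deleteEdges_le _
  have hedge : s(x, y) ∉ q.edges := fun h => by simpa using q.edges_subset_edgeSet h
  refine ⟨q.mapLe hle, isInducedCycleW_iff.2 ⟨?_, ?_⟩, ?_⟩
  · refine (Walk.cons_isCycle_iff _ _).2 ⟨(Walk.isPath_mapLe hle).2 hq.isPath, ?_⟩
    rwa [Walk.edges_mapLe_eq_edges, Sym2.eq_swap (a := y)]
  · rw [Walk.isChordless_iff_forall_mem_edges]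
    intro a b ha hb hab
    have mem {c : V} (hc : c ∈ (Walk.cons hxy.symm (q.mapLe hle)).support) : c ∈ q.support := by
      rw [Walk.support_cons, Walk.support_mapLe_eq_support, List.mem_cons] at hc
      exact hc.elim (fun h => h ▸ q.end_mem_support) id
    rw [Walk.edges_cons, Walk.edges_mapLe_eq_edges, List.mem_cons, Sym2.eq_swap (a := y)]
    by_cases hchord : s(a, b) = s(x, y)
    · exact .inl hchord
    · exact .inr (hq.isChordless.mem_edges (mem ha) (mem hb) (by simp [hab, hchord]))
  · rw [Walk.support_mapLe_eq_support]
    simpa [Walk.toDeleteEdge] using hqw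

theorem exists_isInducedCycleW_cons_of_walk (hxy : G.Adj x y) (hxu : G.Adj x u) (hvy : G.Adj v y)
    (w : G.Walk u v) (hx : x ∉ w.support) (hy : y ∉ w.support) :
    ∃ q : G.Walk x y, IsInducedCycleW G (.cons hxy.symm q) ∧
      ∀ z ∈ q.support, z = x ∨ z = y ∨ z ∈ w.support := by
  have hedge : s(x, y) ∉ (Walk.cons hxu (w.concat hvy)).edges := by
    rw [Walk.edges_cons, Walk.edges_concat, List.mem_cons, List.concat_eq_append, List.mem_append,
      List.mem_singleton]
    rintro (h | h | h)
    · rcases Sym2.eq_iff.1 h with ⟨-, rfl⟩ | ⟨rfl, -⟩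
      exacts [hy w.start_mem_support, hx w.start_mem_support]
    · exact hx (w.fst_mem_support_of_mem_edges h)
    · rcases Sym2.eq_iff.1 h with ⟨rfl, -⟩ | ⟨rfl, -⟩
      exacts [hx w.end_mem_support, G.irrefl hxy]
  obtain ⟨q, hq, hqw⟩ := exists_isInducedCycleW_cons hxy _ hedge
  refine ⟨q, hq, fun z hz => ?_⟩
  have := hqw hz
  simp only [Walk.support_cons, Walk.support_concat, List.mem_cons,
    List.mem_append, List.not_mem_nil, or_false] at this
  tauto

theorem Chordal.exists_adj_adj (h : Chordal G) (hxy : G.Adj x y) (hxu : G.Adj x u)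
    (hvy : G.Adj v y) (w : G.Walk u v) (hx : x ∉ w.support) (hy : y ∉ w.support) :
    ∃ z ∈ w.support, G.Adj x z ∧ G.Adj z y := by
  obtain ⟨q, hq, hqw⟩ := exists_isInducedCycleW_cons_of_walk hxy hxu hvy w hx hy
  have hlen : q.length = 2 := by
    have := hq.1.three_le_length
    have : ¬ 4 ≤ (Walk.cons hxy.symm q).length := fun h4 => h ⟨_, _, hq, h4⟩
    rw [Walk.length_cons] at *
    omega
  have hxz : G.Adj x (q.getVert 1) := by simpa using q.adj_getVert_succ (i := 0) (by omega)
  have hzy : G.Adj (q.getVert 1) y := by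
    simpa [← hlen] using q.adj_getVert_succ (i := 1) (by omega)
  rcases hqw _ (q.getVert_mem_support 1) with hz | hz | hz
  · exact absurd hz hxz.ne'
  · exact absurd hz hzy.ne
  · exact ⟨_, hz, hxz, hzy⟩

/-- `G` has no hole, that is, no induced cycle with at least five vertices. -/
def HoleFree (G : SimpleGraph V) : Prop :=
  ¬ ∃ (u : V) (w : G.Walk u u), IsInducedCycleW G w ∧ 5 ≤ w.length

theorem HoleFree.exists_adj_adj_or (h : HoleFree G) (hxy : G.Adj x y) (hxu : G.Adj x u)
    (hvy : G.Adj v y) (w : G.Walk u v) (hx : x ∉ w.support) (hy : y ∉ w.support) :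
    (∃ z ∈ w.support, G.Adj x z ∧ G.Adj z y) ∨
      ∃ z ∈ w.support, ∃ z' ∈ w.support, G.Adj x z ∧ G.Adj z z' ∧ G.Adj z' y := by
  obtain ⟨q, hq, hqw⟩ := exists_isInducedCycleW_cons_of_walk hxy hxu hvy w hx hy
  have hlen : q.length = 2 ∨ q.length = 3 := by
    have := hq.1.three_le_length
    have : ¬ 5 ≤ (Walk.cons hxy.symm q).length := fun h5 => h ⟨_, _, hq, h5⟩
    rw [Walk.length_cons] at *
    omega
  have hpath : q.IsPath := ((Walk.cons_isCycle_iff _ _).1 hq.1).1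
  have mem {i : ℕ} (hi : 0 < i) (hiq : i < q.length) : q.getVert i ∈ w.support := by
    rcases hqw _ (q.getVert_mem_support i) with hz | hz | hz
    · exact absurd (hpath.getVert_injOn hiq.le (Nat.zero_le _) (hz.trans q.getVert_zero.symm))
        hi.ne'
    · exact absurd (hpath.getVert_injOn hiq.le (le_refl q.length)
        (hz.trans q.getVert_length.symm)) hiq.ne
    · exact hz
  have hstart : G.Adj x (q.getVert 1) := by simpa using q.adj_getVert_succ (i := 0) (by omega)
  rcases hlen with hlen | hlen
  · exact .inl ⟨_, mem one_pos (by omega), hstart,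
      by simpa [← hlen] using q.adj_getVert_succ (i := 1) (by omega)⟩
  · exact .inr ⟨_, mem one_pos (by omega), _, mem two_pos (by omega), hstart,
      q.adj_getVert_succ (by omega), by simpa [← hlen] using q.adj_getVert_succ (i := 2) (by omega)⟩

theorem exists_walk_getVert_getVert (p : G.Walk u v) {i j : ℕ} (hij : i ≤ j) (hj : j ≤ p.length) :
    ∃ q : G.Walk (p.getVert i) (p.getVert j),
      ∀ z ∈ q.support, ∃ k, i ≤ k ∧ k ≤ j ∧ p.getVert k = z := by
  induction j, hij using Nat.le_induction with
  | base => exact ⟨.nil, fun z hz => ⟨i, le_rfl, le_rfl, by simp_all⟩⟩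
  | succ j hij ih =>
    obtain ⟨q, hq⟩ := ih (by omega)
    refine ⟨q.concat (p.adj_getVert_succ hj), fun z hz => ?_⟩
    rw [Walk.support_concat, List.mem_append, List.mem_singleton] at hz
    rcases hz with hz | rfl
    · obtain ⟨k, hik, hkj, rfl⟩ := hq z hz
      exact ⟨k, hik, hkj.trans j.le_succ, rfl⟩
    · exact ⟨j + 1, by omega, le_rfl, rfl⟩

theorem HoleFree.le_add_two_of_adj_getVert (hG : HoleFree G) {p : G.Walk u v}
    (hp : IsInducedPathW G p) {l r : ℕ} (hr : r ≤ p.length)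
    (hxl : G.Adj x (p.getVert l)) (hxr : G.Adj x (p.getVert r))
    (hx : ∀ k, l < k → k < r → ¬ G.Adj x (p.getVert k)) : r ≤ l + 2 := by
  by_contra! hlr
  obtain ⟨q, hq⟩ := exists_walk_getVert_getVert p (i := l + 1) (j := r) (by omega) hr
  have adj_iff {i j : ℕ} (hi : i ≤ r) (hj : j ≤ r) := hp.adj_getVert_iff (hi.trans hr) (hj.trans hr)
  have eq_of_adj {z : V} (hz : z ∈ q.reverse.support) (hxz : G.Adj x z) : z = p.getVert r := by
    obtain ⟨k, hlk, hkr, rfl⟩ := hq z (by simpa using hz)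
    by_contra hne
    exact hx k hlk (hkr.lt_of_ne fun e => hne (e ▸ rfl)) hxz
  have hxq : x ∉ q.reverse.support := by
    intro hxq
    obtain ⟨k, -, hkr, rfl⟩ := hq x (by simpa using hxq)
    rw [adj_iff hkr (by omega)] at hxl
    rw [adj_iff hkr le_rfl] at hxr
    omega
  have hlq : p.getVert l ∉ q.reverse.support := by
    intro hlq
    obtain ⟨k, hlk, hkr, hk⟩ := hq _ (by simpa using hlq)
    have := hp.isPath.getVert_injOn (hkr.trans hr) (show l ≤ p.length by omega) hk
    omega
  rcases hG.exists_adj_adj_or hxl hxr (p.adj_getVert_succ (by omega)).symm q.reverse hxq hlq with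
    ⟨z, hz, hxz, hzl⟩ | ⟨z, hz, z', hz', hxz, hzz', hzl⟩
  · rw [eq_of_adj hz hxz, adj_iff le_rfl (by omega)] at hzl
    omega
  · obtain ⟨k, hlk, hkr, rfl⟩ := hq z' (by simpa using hz')
    rw [eq_of_adj hz hxz, adj_iff le_rfl hkr] at hzz'
    rw [adj_iff hkr (by omega)] at hzl
    omega

end CyclesThroughAnEdge

section ForbiddenSubgraphs

variable {G : SimpleGraph V} {H : SimpleGraph W}

/-- `a b c d` is an induced 4-cycle and `e` is adjacent to `a` and `b` only: these five vertices
induce a house. -/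
structure IsHouse (G : SimpleGraph V) (a b c d e : V) : Prop where
  ab : G.Adj a b
  bc : G.Adj b c
  cd : G.Adj c d
  ad : G.Adj a d
  ae : G.Adj a e
  be : G.Adj b e
  not_ac : ¬ G.Adj a c
  not_bd : ¬ G.Adj b d
  not_ce : ¬ G.Adj c e
  not_de : ¬ G.Adj d e

/-- `a b c d` is an induced 4-cycle with two feet: `e` is adjacent to `c` only, and `f` to `d` only.
Adjacency of the feet `e`, `f` is left open, so that the six vertices induce a domino if they are
adjacent and an `A` if they are not. -/
structure FootedC4 (G : SimpleGraph V) (a b c d e f : V) : Prop where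
  ab : G.Adj a b
  bc : G.Adj b c
  cd : G.Adj c d
  ad : G.Adj a d
  ce : G.Adj c e
  df : G.Adj d f
  not_ac : ¬ G.Adj a c
  not_bd : ¬ G.Adj b d
  not_ae : ¬ G.Adj a e
  not_be : ¬ G.Adj b e
  not_de : ¬ G.Adj d e
  not_af : ¬ G.Adj a f
  not_bf : ¬ G.Adj b f
  not_cf : ¬ G.Adj c f

theorem IsHouse.map_iff (f : H ↪g G) {a b c d e : W} :
    IsHouse G (f a) (f b) (f c) (f d) (f e) ↔ IsHouse H a b c d e := by
  constructor <;> rintro ⟨⟩ <;> constructor <;> simp_all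

theorem FootedC4.map_iff (φ : H ↪g G) {a b c d e f : W} :
    FootedC4 G (φ a) (φ b) (φ c) (φ d) (φ e) (φ f) ↔ FootedC4 H a b c d e f := by
  constructor <;> rintro ⟨⟩ <;> constructor <;> simp_all

theorem FootedC4.symm {a b c d e f : V} (h : FootedC4 G a b c d e f) : FootedC4 G b a d c f e :=
  ⟨h.ab.symm, h.ad, h.cd.symm, h.bc, h.df, h.ce, h.not_bd, h.not_ac, h.not_bf, h.not_af, h.not_cf,
    h.not_be, h.not_ae, h.not_de⟩

theorem IsHouse.injective {a b c d e : V} (h : IsHouse G a b c d e) :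
    Function.Injective ![a, b, c, d, e] := by
  obtain ⟨ab, bc, cd, ad, ae, be, ac, bd, ce, de⟩ := h
  have ne_ac : a ≠ c := fun h => ce (h ▸ ae)
  have ne_bd : b ≠ d := fun h => de (h ▸ be)
  have ne_ce : c ≠ e := fun h => ac (h ▸ ae)
  have ne_de : d ≠ e := fun h => bd (h ▸ be)
  simp [Function.Injective, Fin.forall_fin_succ, ab.ne, bc.ne, cd.ne, ad.ne, ae.ne, be.ne, ab.ne',
    bc.ne', cd.ne', ad.ne', ae.ne', be.ne', ne_ac, ne_bd, ne_ce, ne_de, ne_ac.symm, ne_bd.symm,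
    ne_ce.symm, ne_de.symm]

theorem hasInducedSubgraphIso_houseGraph_iff :
    HasInducedSubgraphIso G houseGraph ↔ ∃ a b c d e, IsHouse G a b c d e := by
  constructor
  · rintro ⟨f, hf⟩
    exact ⟨f 0, f 1, f 2, f 3, f 4, by constructor <;> simp [hf, houseGraph]⟩
  · rintro ⟨a, b, c, d, e, h⟩
    refine ⟨⟨_, h.injective⟩, fun i j => ?_⟩
    cases h
    fin_cases i <;> fin_cases j <;> simp_all [houseGraph, G.adj_comm]

theorem FootedC4.injective {a b c d e f : V} (h : FootedC4 G a b c d e f) :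
    Function.Injective ![a, b, c, d, e, f] := by
  have ne_ac : a ≠ c := fun e => h.not_ae (e ▸ h.ce)
  have ne_bd : b ≠ d := fun e => h.not_bf (e ▸ h.df)
  have ne_ae : a ≠ e := fun e => h.not_de (e ▸ h.ad.symm)
  have ne_be : b ≠ e := fun e => h.not_ae (e ▸ h.ab)
  have ne_de : d ≠ e := fun e => h.not_ae (e ▸ h.ad)
  have ne_af : a ≠ f := fun e => h.not_bf (e ▸ h.ab.symm)
  have ne_bf : b ≠ f := fun e => h.not_af (e ▸ h.ab)
  have ne_cf : c ≠ f := fun e => h.not_bf (e ▸ h.bc)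
  have ne_ef : e ≠ f := fun e => h.not_cf (e ▸ h.ce)
  simp [Function.Injective, Fin.forall_fin_succ, h.ab.ne, h.bc.ne, h.cd.ne, h.ad.ne, h.ce.ne,
    h.df.ne, h.ab.ne', h.bc.ne', h.cd.ne', h.ad.ne', h.ce.ne', h.df.ne', ne_ac, ne_bd, ne_ae, ne_be,
    ne_de, ne_af, ne_bf, ne_cf, ne_ef, ne_ac.symm, ne_bd.symm, ne_ae.symm, ne_be.symm, ne_de.symm,
    ne_af.symm, ne_bf.symm, ne_cf.symm, ne_ef.symm]

theorem hasInducedSubgraphIso_dominoGraph_iff :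
    HasInducedSubgraphIso G dominoGraph ↔
      ∃ a b c d e f, FootedC4 G a b c d e f ∧ G.Adj e f := by
  constructor
  · rintro ⟨f, hf⟩
    exact ⟨f 0, f 1, f 2, f 3, f 4, f 5, by constructor <;> simp [hf, dominoGraph],
      by simp [hf, dominoGraph]⟩
  · rintro ⟨a, b, c, d, e, f, h, hef⟩
    refine ⟨⟨_, h.injective⟩, fun i j => ?_⟩
    cases h
    fin_cases i <;> fin_cases j <;> simp_all [dominoGraph, G.adj_comm]

theorem hasInducedSubgraphIso_aGraph_iff :
    HasInducedSubgraphIso G aGraph ↔ ∃ a b c d e f, FootedC4 G a b c d e f ∧ ¬ G.Adj e f := by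
  constructor
  · rintro ⟨f, hf⟩
    exact ⟨f 0, f 1, f 2, f 3, f 4, f 5, by constructor <;> simp [hf, aGraph],
      by simp [hf, aGraph]⟩
  · rintro ⟨a, b, c, d, e, f, h, hef⟩
    refine ⟨⟨_, h.injective⟩, fun i j => ?_⟩
    cases h
    fin_cases i <;> fin_cases j <;> simp_all [aGraph, G.adj_comm]

theorem HoleFree.of_embedding (f : H ↪g G) (h : HoleFree G) : HoleFree H :=
  fun ⟨u, w, hw, hlen⟩ => h ⟨f u, w.map f.toHom, hw.map f, by simpa using hlen⟩

/-- `G` contains no hole, no house and no domino. -/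
structure HHDFree (G : SimpleGraph V) : Prop where
  holeFree : HoleFree G
  not_isHouse : ∀ a b c d e, ¬ IsHouse G a b c d e
  not_adj_of_footedC4 : ∀ {a b c d e f}, FootedC4 G a b c d e f → ¬ G.Adj e f

/-- `G` contains no hole, no house, no domino and no `A`. A domino and an `A` are the two kinds of
footed 4-cycles, so that they are excluded together. -/
structure WeaklyPolarizable (G : SimpleGraph V) : Prop extends HHDFree G where
  not_footedC4 : ∀ a b c d e f, ¬ FootedC4 G a b c d e f

theorem HHDFree.of_embedding (f : H ↪g G) (h : HHDFree G) : HHDFree H where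
  holeFree := h.holeFree.of_embedding f
  not_isHouse _ _ _ _ _ hH := h.not_isHouse _ _ _ _ _ ((IsHouse.map_iff f).2 hH)
  not_adj_of_footedC4 hH hef :=
    h.not_adj_of_footedC4 ((FootedC4.map_iff f).2 hH) (f.map_adj_iff.2 hef)

theorem WeaklyPolarizable.of_embedding (f : H ↪g G) (h : WeaklyPolarizable G) :
    WeaklyPolarizable H where
  toHHDFree := h.toHHDFree.of_embedding f
  not_footedC4 _ _ _ _ _ _ hH := h.not_footedC4 _ _ _ _ _ _ ((FootedC4.map_iff f).2 hH)

theorem weaklyPolarizable_iff : WeaklyPolarizable G ↔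
    (¬ ∃ (u : V) (w : G.Walk u u), IsInducedCycleW G w ∧ 5 ≤ w.length) ∧
      ¬ HasInducedSubgraphIso G houseGraph ∧ ¬ HasInducedSubgraphIso G dominoGraph ∧
      ¬ HasInducedSubgraphIso G aGraph := by
  rw [hasInducedSubgraphIso_houseGraph_iff, hasInducedSubgraphIso_dominoGraph_iff,
    hasInducedSubgraphIso_aGraph_iff]
  push Not
  constructor
  · intro h
    exact ⟨fun u w hw => not_le.1 fun h5 => h.holeFree ⟨u, w, hw, h5⟩, h.not_isHouse,
      fun _ _ _ _ _ _ => h.not_adj_of_footedC4,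
      fun _ _ _ _ _ _ hf => (h.not_footedC4 _ _ _ _ _ _ hf).elim⟩
  · rintro ⟨hole, house, domino, a⟩
    exact ⟨⟨fun ⟨u, w, hw, h5⟩ => (hole u w hw).not_ge h5, house, domino _ _ _ _ _ _⟩,
      fun _ _ _ _ _ _ hf => domino _ _ _ _ _ _ hf (a _ _ _ _ _ _ hf)⟩

end ForbiddenSubgraphs

section ConvexGeometries

variable {Cvx : Set V → Prop} {S T : Set V}

theorem chull_subset (hST : S ⊆ T) (hT : Cvx T) : chull Cvx S ⊆ T :=
  Set.sInter_subset_of_mem ⟨hST, hT⟩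

theorem isConvexGeometry_iff : IsConvexGeometry Cvx ↔
    ∀ S T : Set V, Cvx S → Cvx T → extremeSet Cvx S ⊆ T → S ⊆ T := by
  constructor
  · intro h S T hS hT hST
    rw [h S hS]
    exact chull_subset hST hT
  · intro h S hS
    exact (Set.subset_sInter fun T hT => h S T hS hT.2 hT.1).antisymm
      (chull_subset (fun _ hx => hx.1) hS)

theorem IsConvexGeometry.of_image {Cvx' : Set W → Prop} {f : W → V} (hf : Function.Injective f)
    (hCvx : ∀ T : Set W, Cvx' T ↔ Cvx (f '' T)) (h : IsConvexGeometry Cvx) :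
    IsConvexGeometry Cvx' := by
  rw [isConvexGeometry_iff] at *
  intro S T hS hT hST
  refine (Set.image_subset_image_iff hf).1 (h _ _ ((hCvx S).1 hS) ((hCvx T).1 hT) ?_)
  rintro _ ⟨⟨x, hx, rfl⟩, hdiff⟩
  refine Set.mem_image_of_mem f (hST ⟨hx, (hCvx _).2 ?_⟩)
  rwa [Set.image_sdiff hf, Set.image_singleton]

end ConvexGeometries

section M3Convexity

variable {G : SimpleGraph V} {H : SimpleGraph W} {K S : Set V} {a b c x : V}

/-- Convexity with respect to the induced paths of length at least three. -/
abbrev M3Convex (G : SimpleGraph V) (S : Set V) : Prop :=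
  PConvex G (fun _ _ w => IsInducedPathW G w ∧ 3 ≤ w.length) S

theorem m3Convex_empty : M3Convex G ∅ := fun _ _ hu => hu.elim

theorem m3Convex_univ : M3Convex G Set.univ := fun _ _ _ _ _ _ _ _ => trivial

theorem m3Convex_singleton : M3Convex G {x} := by
  rintro _ _ rfl rfl w ⟨hw, hlen⟩
  have := Walk.length_eq_zero_iff.2 (Walk.isPath_iff_nil.1 hw.isPath)
  omega

theorem M3Convex.mem_of_inducedP4 (hK : M3Convex G K) (h : InducedP4 G a x b c) (ha : a ∈ K)
    (hc : c ∈ K) : x ∈ K := by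
  obtain ⟨w, hw, hlen, hsupp⟩ := h.exists_isInducedPathW
  exact hK ha hc w ⟨hw, hlen.ge⟩ x (by simp [hsupp])

theorem M3Convex.preimage (f : H ↪g G) (hK : M3Convex G K) : M3Convex H (f ⁻¹' K) :=
  fun _ _ hu hv w ⟨hw, hlen⟩ x hx => hK hu hv (w.map f.toHom)
    ⟨(isInducedPathW_map_iff f).2 hw, by simpa using hlen⟩ (f x)
    (by rw [Walk.support_map]; exact List.mem_map_of_mem hx)

theorem M3Convex.preimage_val (hK : M3Convex G K) : M3Convex (G.induce S) (Subtype.val ⁻¹' K) :=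
  hK.preimage (Embedding.induce S)

theorem M3Convex.induce_iff (hS : M3Convex G S) {T : Set S} :
    M3Convex (G.induce S) T ↔ M3Convex G (Subtype.val '' T) := by
  constructor
  · rintro hT _ _ ⟨u, hu, rfl⟩ ⟨v, hv, rfl⟩ w hw x hx
    have hwS := hS u.2 v.2 w hw
    refine ⟨⟨x, hwS x hx⟩, hT hu hv (w.induce S hwS) ⟨?_, ?_⟩ _ ?_, rfl⟩
    · rw [← isInducedPathW_map_iff (Embedding.induce S), Walk.map_induce]
      exact hw.1
    · rw [← Walk.length_map (Embedding.induce S).toHom, Walk.map_induce]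
      exact hw.2
    · simpa using hx
  · intro hT
    have := hT.preimage_val (S := S)
    rwa [Set.preimage_image_eq _ Subtype.val_injective] at this

theorem IsConvexGeometry.induce (hG : IsConvexGeometry (M3Convex G)) (hS : M3Convex G S) :
    IsConvexGeometry (M3Convex (G.induce S)) :=
  hG.of_image Subtype.val_injective fun _ => hS.induce_iff

theorem M3Convex.mem_extremeSet_iff (hS : M3Convex G S) : x ∈ extremeSet (M3Convex G) S ↔
    x ∈ S ∧ ∀ a ∈ S, ∀ b ∈ S, ∀ c ∈ S, ¬ InducedP4 G a x b c := by
  refine and_congr_right fun hx => ⟨fun h a ha b _ c hc hP => ?_, fun h u v hu hv w hw y hy => ?_⟩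
  · have hax : a ≠ x := hP.1.ne
    have hcx : c ≠ x := fun e => hP.2.2.2.2.1 (e ▸ hP.1)
    exact (h.mem_of_inducedP4 hP ⟨ha, hax⟩ ⟨hc, hcx⟩).2 rfl
  · have hwS := hS hu.1 hv.1 w hw
    refine ⟨hwS y hy, ?_⟩
    rintro rfl
    obtain ⟨a, ha, b, hb, c, hc, hP⟩ :=
      hw.1.exists_inducedP4 hw.2 hy (Ne.symm hu.2) (Ne.symm hv.2)
    exact h a (hwS a ha) b (hwS b hb) c (hwS c hc) hP

/-- No induced path on four vertices has `x` as an interior vertex. -/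
def Semisimplicial (G : SimpleGraph V) (x : V) : Prop := ∀ a b c, ¬ InducedP4 G a x b c

theorem semisimplicial_induce_iff {x : S} : Semisimplicial (G.induce S) x ↔
    ∀ a ∈ S, ∀ b ∈ S, ∀ c ∈ S, ¬ InducedP4 G a x b c :=
  ⟨fun h a ha b hb c hc => h ⟨a, ha⟩ ⟨b, hb⟩ ⟨c, hc⟩, fun h a b c => h a a.2 b b.2 c c.2⟩

end M3Convexity

section Modules

variable {G : SimpleGraph V} {M : Set V} {y z m m' : V}

/-- `z` splits `A` if it is adjacent to some, but not to all vertices of `A`. -/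
def Splits (G : SimpleGraph V) (z : V) (A : Set V) : Prop :=
  (∃ a ∈ A, G.Adj z a) ∧ ∃ a ∈ A, ¬ G.Adj z a

/-- A module: no outside vertex can tell the vertices of `M` apart. -/
def IsModule (G : SimpleGraph V) (M : Set V) : Prop := ∀ z ∉ M, ¬ Splits G z M

theorem IsModule.adj (hM : IsModule G M) (hz : z ∉ M) (hm : m ∈ M) (hm' : m' ∈ M)
    (h : G.Adj z m) : G.Adj z m' :=
  by_contra fun h' => hM z hz ⟨⟨m, hm, h⟩, m', hm', h'⟩

theorem IsModule.m3Convex (hM : IsModule G M) : M3Convex G M := by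
  classical
  intro u v hu hv w ⟨hw, hlen⟩ x hx
  by_contra hxM
  obtain ⟨d, hd, hdM, hdM'⟩ := (w.takeUntil x hx).exists_boundary_dart M hu hxM
  obtain ⟨i, hi, hiw⟩ := Walk.mem_support_iff_exists_getVert.1
    (w.support_takeUntil_subset_support hx (Walk.dart_snd_mem_support_of_mem_darts _ hd))
  have adj {m : V} (hm : m ∈ M) : G.Adj d.toProd.2 m := hM.adj hdM' hdM hm d.adj.symm
  have hstart : G.Adj (w.getVert 0) (w.getVert i) := by
    rw [w.getVert_zero, hi]; exact (adj hu).symm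
  have hend : G.Adj (w.getVert i) (w.getVert w.length) := by
    rw [w.getVert_length, hi]; exact adj hv
  rw [hw.adj_getVert_iff (by omega) (by omega)] at hstart hend
  omega

theorem IsModule.semisimplicial_of_notMem (hM : IsModule G M) (hm : m ∈ M) (hy : y ∉ M)
    (h : Semisimplicial (G.induce (insert m Mᶜ)) ⟨y, .inr hy⟩) : Semisimplicial G y := by
  rw [semisimplicial_induce_iff] at h
  rintro a b c ⟨hay, hyb, hbc, hab, hac, hyc⟩
  have adj_iff {z m' : V} (hz : z ∉ M) (hm' : m' ∈ M) : G.Adj z m' ↔ G.Adj z m :=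
    ⟨hM.adj hz hm' hm, hM.adj hz hm hm'⟩
  by_cases haM : a ∈ M
  · have hcM : c ∉ M := fun hcM => hyc (hM.adj hy haM hcM hay.symm)
    have hbM : b ∉ M := fun hbM => hac (hM.adj hcM hbM haM hbc.symm).symm
    refine h m (.inl rfl) b (.inr hbM) c (.inr hcM) ⟨?_, hyb, hbc, ?_, ?_, hyc⟩
    · exact ((adj_iff hy haM).1 hay.symm).symm
    · rwa [G.adj_comm, ← adj_iff hbM haM, G.adj_comm]
    · rwa [G.adj_comm, ← adj_iff hcM haM, G.adj_comm]
  by_cases hbM : b ∈ M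
  · have hcM : c ∉ M := fun hcM => hyc (hM.adj hy hbM hcM hyb)
    exact h a (.inr haM) m (.inl rfl) c (.inr hcM) ⟨hay, (adj_iff hy hbM).1 hyb,
      ((adj_iff hcM hbM).1 hbc.symm).symm, by rwa [← adj_iff haM hbM], hac, hyc⟩
  by_cases hcM : c ∈ M
  · exact h a (.inr haM) b (.inr hbM) m (.inl rfl) ⟨hay, hyb, (adj_iff hbM hcM).1 hbc, hab,
      by rwa [← adj_iff haM hcM], by rwa [← adj_iff hy hcM]⟩
  · exact h a (.inr haM) b (.inr hbM) c (.inr hcM) ⟨hay, hyb, hbc, hab, hac, hyc⟩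

theorem IsModule.semisimplicial_of_mem (hM : IsModule G M) (hy : y ∈ M)
    (hin : Semisimplicial (G.induce M) ⟨y, hy⟩)
    (hout : Semisimplicial (G.induce (insert y Mᶜ)) ⟨y, .inl rfl⟩) : Semisimplicial G y := by
  rw [semisimplicial_induce_iff] at hin hout
  rintro a b c h
  obtain ⟨hay, hyb, hbc, hab, hac, hyc⟩ := id h
  by_cases haM : a ∈ M
  · have hbM : b ∈ M := by_contra fun hbM => hab (hM.adj hbM hy haM hyb.symm).symm
    have hcM : c ∈ M := by_contra fun hcM => hyc (hM.adj hcM hbM hy hbc.symm).symm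
    exact hin a haM b hbM c hcM h
  · have hbM : b ∉ M := fun hbM => hab (hM.adj haM hy hbM hay)
    have hcM : c ∉ M := fun hcM => hac (hM.adj haM hy hcM hay)
    exact hout a (.inr haM) b (.inr hbM) c (.inr hcM) h

end Modules

section Joins

variable {G : SimpleGraph V} {A B : Set V} {a b c d z z' : V}

/-- `A` induces a connected subgraph of the complement of `G`. -/
def CoConnected (G : SimpleGraph V) (A : Set V) : Prop := (Gᶜ.induce A).Connected

theorem CoConnected.exists_of_splits (hA : CoConnected G A) (hz : Splits G z A) :
    ∃ a ∈ A, ∃ a' ∈ A, G.Adj z a ∧ ¬ G.Adj z a' ∧ ¬ G.Adj a a' := by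
  obtain ⟨⟨a, ha, hza⟩, a', ha', hza'⟩ := hz
  obtain ⟨p⟩ := hA.preconnected ⟨a, ha⟩ ⟨a', ha'⟩
  obtain ⟨d, -, hd, hd'⟩ := p.exists_boundary_dart {x | G.Adj z x} hza hza'
  exact ⟨_, d.toProd.1.2, _, d.toProd.2.2, hd, hd', (compl_adj ..).1 d.adj |>.2⟩

theorem coConnected_singleton : CoConnected G {a} :=
  have : Nonempty ({a} : Set V) := ⟨⟨a, rfl⟩⟩
  ⟨.of_subsingleton⟩

theorem CoConnected.insert (hA : CoConnected G A) (ha : a ∈ A) (hz : ¬ G.Adj z a) :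
    CoConnected G (insert z A) := by
  by_cases hzA : z ∈ A
  · rwa [Set.insert_eq_of_mem hzA]
  · have hza : Gᶜ.Adj z a := ⟨fun h => hzA (h ▸ ha), hz⟩
    have := induce_union_connected (induce_pair_connected_of_adj hza).preconnected hA.preconnected
      ⟨a, by simp, ha⟩
    rwa [Set.insert_union, Set.singleton_union, Set.insert_eq_of_mem ha] at this

theorem coConnected_pair (h : ¬ G.Adj a b) : CoConnected G {a, b} :=
  coConnected_singleton.insert rfl h

/-- Two nontrivial co-connected sets that are completely adjacent to each other. -/
structure IsJoin (G : SimpleGraph V) (A B : Set V) : Prop where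
  coConnected_left : CoConnected G A
  coConnected_right : CoConnected G B
  nontrivial_left : A.Nontrivial
  nontrivial_right : B.Nontrivial
  adj : ∀ a ∈ A, ∀ b ∈ B, G.Adj a b

theorem IsJoin.symm (h : IsJoin G A B) : IsJoin G B A :=
  ⟨h.2, h.1, h.4, h.3, fun b hb a ha => (h.adj a ha b hb).symm⟩

theorem IsJoin.notMem_right (h : IsJoin G A B) (ha : a ∈ A) : a ∉ B :=
  fun hB => G.irrefl (h.adj a ha a hB)

theorem isJoin_pair_pair (hab : G.Adj a b) (hbc : G.Adj b c) (hcd : G.Adj c d) (had : G.Adj a d)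
    (hac : ¬ G.Adj a c) (hbd : ¬ G.Adj b d) (hac' : a ≠ c) (hbd' : b ≠ d) :
    IsJoin G {a, c} {b, d} := by
  refine ⟨coConnected_pair hac, coConnected_pair hbd, Set.nontrivial_pair hac',
    Set.nontrivial_pair hbd', ?_⟩
  rintro x (rfl | rfl) y (rfl | rfl)
  exacts [hab, had, hbc.symm, hcd]

/-- A join none of whose sides can be enlarged. -/
def IsMaxJoin (G : SimpleGraph V) (A B : Set V) : Prop :=
  Maximal (fun q : Set V × Set V => IsJoin G q.1 q.2) (A, B)

theorem IsMaxJoin.isJoin (h : IsMaxJoin G A B) : IsJoin G A B := h.prop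

theorem IsMaxJoin.symm (h : IsMaxJoin G A B) : IsMaxJoin G B A :=
  ⟨h.isJoin.symm, fun q hq hle => (h.2 (y := q.swap) hq.symm hle.symm).symm⟩

theorem IsJoin.exists_isMaxJoin [Finite V] (h : IsJoin G A B) :
    ∃ A' B', A ⊆ A' ∧ B ⊆ B' ∧ IsMaxJoin G A' B' := by
  obtain ⟨⟨A', B'⟩, hle, hmax⟩ := Finite.exists_le_maximal
    (p := fun q : Set V × Set V => IsJoin G q.1 q.2) (a := (A, B)) h
  exact ⟨A', B', hle.1, hle.2, hmax⟩

theorem IsMaxJoin.exists_not_adj_right (h : IsMaxJoin G A B) (hzA : z ∉ A) (ha : a ∈ A)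
    (hza : ¬ G.Adj z a) : ∃ b ∈ B, ¬ G.Adj z b := by
  by_contra! hzB
  have hjoin : IsJoin G (insert z A) B := by
    refine ⟨h.isJoin.1.insert ha hza, h.isJoin.2, h.isJoin.3.mono (Set.subset_insert _ _),
      h.isJoin.4, ?_⟩
    rintro x (rfl | hx)
    exacts [hzB, h.isJoin.adj x hx]
  have hle := h.2 (y := (insert z A, B)) hjoin ⟨Set.subset_insert _ _, le_rfl⟩
  exact hzA (hle.1 (Set.mem_insert z A))

theorem IsMaxJoin.not_adj_of_splits (h : IsMaxJoin G A B)
    (hhouse : ∀ a b c d e, ¬ IsHouse G a b c d e) (hzA : z ∉ A) (hz : Splits G z A) (hb : b ∈ B) :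
    ¬ G.Adj z b := by
  intro hzb
  obtain ⟨a, ha, a', ha', hza, hza', haa'⟩ := h.isJoin.coConnected_left.exists_of_splits hz
  obtain ⟨b, hb, b', hb', hzb, hzb', hbb'⟩ := h.isJoin.coConnected_right.exists_of_splits
    ⟨⟨b, hb, hzb⟩, h.exists_not_adj_right hzA ha' hza'⟩
  have adj := h.isJoin.adj
  exact hhouse a b a' b' z ⟨adj a ha b hb, (adj a' ha' b hb).symm, adj a' ha' b' hb',
    adj a ha b' hb', hza.symm, hzb.symm, haa', hbb', mt (·.symm) hza', mt (·.symm) hzb'⟩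

theorem IsMaxJoin.exists_footedC4 (h : IsMaxJoin G A B)
    (hhouse : ∀ a b c d e, ¬ IsHouse G a b c d e) (hzA : z ∉ A) (hz : Splits G z A)
    (hzB' : z' ∉ B) (hz' : Splits G z' B) :
    ∃ a' ∈ A, ∃ b' ∈ B, ∃ a ∈ A, ∃ b ∈ B, FootedC4 G a' b' a b z z' := by
  obtain ⟨a, ha, a', ha', hza, hza', haa'⟩ := h.isJoin.coConnected_left.exists_of_splits hz
  obtain ⟨b, hb, b', hb', hzb, hzb', hbb'⟩ := h.isJoin.coConnected_right.exists_of_splits hz'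
  have adj := h.isJoin.adj
  have anti {b : V} (hb : b ∈ B) : ¬ G.Adj b z :=
    mt (·.symm) (h.not_adj_of_splits hhouse hzA hz hb)
  have anti' {a : V} (ha : a ∈ A) : ¬ G.Adj a z' :=
    mt (·.symm) (h.symm.not_adj_of_splits hhouse hzB' hz' ha)
  exact ⟨a', ha', b', hb', a, ha, b, hb, adj a' ha' b' hb', (adj a ha b' hb').symm, adj a ha b hb,
    adj a' ha' b hb, hza.symm, hzb.symm, mt (·.symm) haa', mt (·.symm) hbb', mt (·.symm) hza',
    anti hb', anti hb, anti' ha', mt (·.symm) hzb', anti' ha⟩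

end Joins

section ChordalGraphs

variable {G : SimpleGraph V} {C T : Set V} {a b c s s' x y z : V}

theorem mem_closedNbhd_comm : x ∈ closedNbhd G y ↔ y ∈ closedNbhd G x := by
  simp only [closedNbhd, Set.mem_insert_iff, mem_neighborSet, G.adj_comm, eq_comm]

/-- The vertices that can be reached from `a` by a walk inside `T`. For `a ∈ T`, this is the
connected component of `a` in the subgraph induced by `T`. -/
def componentIn (G : SimpleGraph V) (T : Set V) (a : V) : Set V :=
  {z | ∃ p : G.Walk a z, ∀ y ∈ p.support, y ∈ T}

theorem mem_componentIn_self (ha : a ∈ T) : a ∈ componentIn G T a :=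
  ⟨.nil, by simpa using ha⟩

theorem componentIn_subset : componentIn G T a ⊆ T :=
  fun _ ⟨p, hp⟩ => hp _ p.end_mem_support

theorem mem_componentIn_of_adj (hz : z ∈ componentIn G T a) (hzy : G.Adj z y) (hy : y ∈ T) :
    y ∈ componentIn G T a := by
  obtain ⟨p, hp⟩ := hz
  refine ⟨p.concat hzy, fun t ht => ?_⟩
  rw [Walk.support_concat, List.mem_append, List.mem_singleton] at ht
  exact ht.elim (hp t) fun h => h ▸ hy

theorem componentIn_subset_of_closed (ha : a ∈ C) (h : ∀ z ∈ C, ∀ y ∈ T, G.Adj z y → y ∈ C) :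
    componentIn G T a ⊆ C := by
  rintro z ⟨p, hp⟩
  by_contra hz
  obtain ⟨d, hd, hdC, hdC'⟩ := p.exists_boundary_dart C ha hz
  exact hdC' (h _ hdC _ (hp _ (p.dart_snd_mem_support_of_mem_darts hd)) d.adj)

theorem exists_walk_of_mem_componentIn (hy : y ∈ componentIn G T a)
    (hz : z ∈ componentIn G T a) : ∃ p : G.Walk y z, ∀ t ∈ p.support, t ∈ componentIn G T a := by
  classical
  obtain ⟨p, hp⟩ := hy
  obtain ⟨q, hq⟩ := hz
  have mem {t u : V} {r : G.Walk a u} (hr : ∀ t ∈ r.support, t ∈ T) (ht : t ∈ r.support) :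
      t ∈ componentIn G T a :=
    ⟨r.takeUntil t ht, fun t' ht' => hr t' (r.support_takeUntil_subset_support ht ht')⟩
  refine ⟨p.reverse.append q, fun t ht => ?_⟩
  rw [Walk.mem_support_append_iff, Walk.support_reverse, List.mem_reverse] at ht
  exact ht.elim (mem hp) (mem hq)

/-- The neighbours of `x` that have a neighbour in the component of `a` in `G - N[x]`. -/
def attachment (G : SimpleGraph V) (x a : V) : Set V :=
  {s | G.Adj x s ∧ ∃ z ∈ componentIn G (closedNbhd G x)ᶜ a, G.Adj z s}

theorem mem_componentIn_or_mem_attachment (hz : z ∈ componentIn G (closedNbhd G x)ᶜ a)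
    (hzy : G.Adj z y) : y ∈ componentIn G (closedNbhd G x)ᶜ a ∨ y ∈ attachment G x a := by
  by_cases hy : y ∈ closedNbhd G x
  · rcases hy with rfl | hxy
    · exact absurd (.inr hzy.symm) (componentIn_subset hz)
    · exact .inr ⟨hxy, z, hz, hzy⟩
  · exact .inl (mem_componentIn_of_adj hz hzy hy)

theorem Chordal.isClique_attachment (h : Chordal G) : G.IsClique (attachment G x a) := by
  rintro s ⟨hxs, z, hz, hzs⟩ s' ⟨hxs', z', hz', hzs'⟩ hne
  obtain ⟨p, hp⟩ := exists_walk_of_mem_componentIn hz' hz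
  have notMem {t : V} (ht : t ∈ closedNbhd G x) : t ∉ p.support :=
    fun htp => componentIn_subset (hp t htp) ht
  obtain ⟨t, ht, hxt, hts⟩ := h.exists_adj_adj hxs hxs' hzs (.cons hzs'.symm p)
    (by simpa [hxs'.ne] using notMem (.inl rfl)) (by simpa [hne] using notMem (.inr hxs))
  rcases List.mem_cons.1 (Walk.support_cons _ p ▸ ht) with rfl | ht
  · exact hts.symm
  · exact absurd ht (notMem (.inr hxt))

theorem componentIn_ssubset {p : V} (hp : attachment G x a ⊆ closedNbhd G p)
    (hz : z ∈ componentIn G (closedNbhd G x)ᶜ a) (hzp : z ∈ closedNbhd G p)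
    (hy : y ∈ componentIn G (closedNbhd G x)ᶜ a) :
    componentIn G (closedNbhd G p)ᶜ y ⊂ componentIn G (closedNbhd G x)ᶜ a := by
  refine ⟨componentIn_subset_of_closed hy fun t ht u hu htu => ?_,
    fun h => componentIn_subset (h hz) hzp⟩
  exact (mem_componentIn_or_mem_attachment ht htu).resolve_right fun h => hu (hp h)

theorem Chordal.simplicialVtx_of_forall (h : Chordal G) (ha : a ∉ closedNbhd G x)
    (hC : ∀ p, attachment G x a ⊆ closedNbhd G p →
      (∃ z ∈ componentIn G (closedNbhd G x)ᶜ a, z ∈ closedNbhd G p) →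
      componentIn G (closedNbhd G x)ᶜ a ⊆ closedNbhd G p) :
    SimplicialVtx G a := by
  set C := componentIn G (closedNbhd G x)ᶜ a
  set S := attachment G x a
  have haC : a ∈ C := mem_componentIn_self ha
  have hS {s : V} (hs : s ∈ S) : S ⊆ closedNbhd G s := fun s' hs' =>
    (eq_or_ne s' s).imp id fun hne => h.isClique_attachment hs hs' hne.symm
  have hSC {s : V} (hs : s ∈ S) : C ⊆ closedNbhd G s :=
    let ⟨_, z, hz, hzs⟩ := hs
    hC s (hS hs) ⟨z, hz, .inr hzs.symm⟩
  have hCS {p : V} (hp : p ∈ C) : S ⊆ closedNbhd G p :=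
    fun s hs => mem_closedNbhd_comm.1 (hSC hs hp)
  have hCC {p : V} (hp : p ∈ C) : C ⊆ closedNbhd G p := hC p (hCS hp) ⟨p, hp, .inl rfl⟩
  have hCuS : closedNbhd G a ⊆ C ∪ S := Set.insert_subset (.inl haC)
    fun y hy => mem_componentIn_or_mem_attachment haC hy
  intro y hy y' hy' hne
  have : y' ∈ closedNbhd G y := by
    rcases hCuS hy with hy | hy <;> rcases hCuS hy' with hy' | hy'
    exacts [hCC hy hy', hCS hy hy', hSC hy hy', hS hy hy']
  exact this.resolve_left hne.symm

theorem Chordal.exists_simplicialVtx [Finite V] (h : Chordal G) (ha : a ∉ closedNbhd G x) :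
    ∃ s ∈ componentIn G (closedNbhd G x)ᶜ a, SimplicialVtx G s := by
  induction hC : componentIn G (closedNbhd G x)ᶜ a using WellFoundedLT.induction
    generalizing a x with
  | _ C ih =>
    subst hC
    by_cases hmax : ∀ p, attachment G x a ⊆ closedNbhd G p →
        (∃ z ∈ componentIn G (closedNbhd G x)ᶜ a, z ∈ closedNbhd G p) →
        componentIn G (closedNbhd G x)ᶜ a ⊆ closedNbhd G p
    · exact ⟨a, mem_componentIn_self ha, h.simplicialVtx_of_forall ha hmax⟩
    · push Not at hmax
      obtain ⟨p, hp, ⟨z, hz, hzp⟩, hCp⟩ := hmax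
      obtain ⟨q, hq, hqp⟩ := Set.not_subset.1 hCp
      have hlt := componentIn_ssubset hp hz hzp hq
      obtain ⟨s, hs, hsimp⟩ := ih _ hlt hqp rfl
      exact ⟨s, hlt.1 hs, hsimp⟩

theorem SimplicialVtx.semisimplicial (hx : SimplicialVtx G x) : Semisimplicial G x :=
  fun _ _ _ ⟨hax, hxb, hbc, hab, hac, _⟩ =>
    hab (hx (.inr hax.symm) (.inr hxb) fun e => hac (e ▸ hbc))

theorem Chordal.exists_mem_closedNbhd (h : Chordal G) (hP : InducedP4 G a x b c)
    (w : G.Walk a c) : ∃ t ∈ w.support, t ∈ closedNbhd G x ∧ t ∈ closedNbhd G b := by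
  obtain ⟨hax, hxb, hbc, -⟩ := hP
  by_cases hx : x ∈ w.support
  · exact ⟨x, hx, .inl rfl, .inr hxb.symm⟩
  by_cases hb : b ∈ w.support
  · exact ⟨b, hb, .inr hxb, .inl rfl⟩
  obtain ⟨t, ht, hxt, htb⟩ := h.exists_adj_adj hxb hax.symm hbc.symm w hx hb
  exact ⟨t, ht, .inr hxt, .inr htb.symm⟩

theorem Chordal.false_of_walk (h : Chordal G) (hP : InducedP4 G a x b c)
    (hz : z ∈ componentIn G (closedNbhd G b)ᶜ a) (hy : y ∈ componentIn G (closedNbhd G x)ᶜ c)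
    (q : G.Walk z y) (hq : ∀ t ∈ q.support, t = z ∨ t = y) : False := by
  have hzb := componentIn_subset hz
  have hyx := componentIn_subset hy
  obtain ⟨p, hp⟩ := hz
  obtain ⟨p', hp'⟩ := hy
  obtain ⟨t, ht, htx, htb⟩ := h.exists_mem_closedNbhd hP ((p.append q).append p'.reverse)
  simp only [Walk.mem_support_append_iff, Walk.support_reverse, List.mem_reverse] at ht
  rcases ht with (ht | ht) | ht
  · exact hp t ht htb
  · rcases hq t ht with rfl | rfl
    exacts [hzb htb, hyx htx]
  · exact hp' t ht htx

theorem Chordal.mem_support_of_inducedP4 (h : Chordal G) (hP : InducedP4 G a x b c)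
    (hs : s ∈ componentIn G (closedNbhd G b)ᶜ a) (hs' : s' ∈ componentIn G (closedNbhd G x)ᶜ c)
    (w : G.Walk s s') (hw : ∀ t ∈ w.support, t ∈ componentIn G (closedNbhd G b)ᶜ a ∨ t = x ∨ t = b ∨
      t ∈ componentIn G (closedNbhd G x)ᶜ c) : x ∈ w.support := by
  have hs'a : s' ∉ componentIn G (closedNbhd G b)ᶜ a :=
    fun hs'a => h.false_of_walk hP hs'a hs' .nil (by simp)
  obtain ⟨d, hd, hz, hy⟩ := w.exists_boundary_dart _ hs hs'a
  have hyw := w.dart_snd_mem_support_of_mem_darts hd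
  rcases (hw _ hyw).resolve_left hy with hyx | hyb | hyc
  · rwa [← hyx]
  · exact absurd (.inr (hyb ▸ d.adj.symm)) (componentIn_subset hz)
  · exact (h.false_of_walk hP hz hyc (.cons d.adj .nil) (by simp)).elim

theorem InducedP4.notMem_closedNbhd (hP : InducedP4 G a x b c) : a ∉ closedNbhd G b := by
  obtain ⟨-, -, hbc, hab, hac, -⟩ := hP
  rintro (rfl | hba)
  exacts [hac hbc, hab hba.symm]

theorem Chordal.exists_isInducedPathW_of_mem_componentIn (h : Chordal G)
    (hP : InducedP4 G a x b c) (hs : s ∈ componentIn G (closedNbhd G b)ᶜ a)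
    (hs' : s' ∈ componentIn G (closedNbhd G x)ᶜ c) :
    ∃ w : G.Walk s s', IsInducedPathW G w ∧ 3 ≤ w.length ∧ x ∈ w.support := by
  obtain ⟨hax, hxb, hbc, -⟩ := id hP
  have ha : a ∈ componentIn G (closedNbhd G b)ᶜ a := mem_componentIn_self hP.notMem_closedNbhd
  have hc : c ∈ componentIn G (closedNbhd G x)ᶜ c := mem_componentIn_self hP.symm.notMem_closedNbhd
  obtain ⟨p, hp⟩ := exists_walk_of_mem_componentIn hs ha
  obtain ⟨p', hp'⟩ := exists_walk_of_mem_componentIn hc hs'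
  obtain ⟨w, hw, hsupp⟩ := exists_isInducedPathW_support_subset
    (p.append (.cons hax (.cons hxb (.cons hbc p'))))
  have hmem : ∀ t ∈ w.support, t ∈ componentIn G (closedNbhd G b)ᶜ a ∨ t = x ∨ t = b ∨
      t ∈ componentIn G (closedNbhd G x)ᶜ c := by
    intro t ht
    have := hsupp ht
    simp only [Walk.mem_support_append_iff, Walk.support_cons, List.mem_cons] at this
    rcases this with ht | rfl | rfl | rfl | ht
    exacts [.inl (hp t ht), .inl ha, .inr (.inl rfl), .inr (.inr (.inl rfl)),
      .inr (.inr (.inr (hp' t ht)))]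
  have hx : x ∈ w.support := h.mem_support_of_inducedP4 hP hs hs' w hmem
  have hb : b ∈ w.reverse.support := h.mem_support_of_inducedP4 hP.symm hs' hs w.reverse
    fun t ht => by have := hmem t (by simpa using ht); tauto
  refine ⟨w, hw, ?_, hx⟩
  obtain ⟨i, rfl, hi⟩ := Walk.mem_support_iff_exists_getVert.1 hx
  obtain ⟨j, rfl, hj⟩ := Walk.mem_support_iff_exists_getVert.1 (by simpa using hb : b ∈ w.support)
  have hsb := componentIn_subset hs
  have hs'x := componentIn_subset hs'
  have hi0 : i ≠ 0 := fun e => hsb (.inr (by simpa [e] using hxb.symm))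
  have hj0 : j ≠ 0 := fun e => hsb (.inl (by simp [e]))
  have hi' : i ≠ w.length := fun e => hs'x (.inl (by simp [e]))
  have hj' : j ≠ w.length := fun e => hs'x (.inr (by simpa [e] using hxb))
  have hij : i ≠ j := fun e => G.irrefl (e ▸ hxb)
  omega

theorem Chordal.exists_simplicialVtx_path [Finite V] (h : Chordal G) (hP : InducedP4 G a x b c) :
    ∃ (s s' : V) (w : G.Walk s s'), SimplicialVtx G s ∧ SimplicialVtx G s' ∧
      IsInducedPathW G w ∧ 3 ≤ w.length ∧ x ∈ w.support := by
  obtain ⟨s, hs, hsimp⟩ := h.exists_simplicialVtx hP.notMem_closedNbhd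
  obtain ⟨s', hs', hsimp'⟩ := h.exists_simplicialVtx hP.symm.notMem_closedNbhd
  obtain ⟨w, hw⟩ := h.exists_isInducedPathW_of_mem_componentIn hP hs hs'
  exact ⟨s, s', w, hsimp, hsimp', hw⟩

end ChordalGraphs

section WeaklyPolarizableGraphs

variable {G : SimpleGraph V} {K M : Set V}

theorem HoleFree.exists_isJoin_of_not_chordal (h : HoleFree G) (hG : ¬ Chordal G) :
    ∃ A B, IsJoin G A B := by
  obtain ⟨u, w, hw, h4⟩ := not_not.1 hG
  have hlen : w.length = 4 := h4.antisymm' (not_lt.1 fun h5 => h ⟨u, w, hw, h5⟩)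
  have adj {i j : ℕ} (hi : 1 ≤ i) (hij : i < j) (hj : j ≤ 4) :
      G.Adj (w.getVert i) (w.getVert j) ↔ j = i + 1 ∨ i = 1 ∧ j = 4 :=
    hlen ▸ hw.adj_getVert_iff hi hij (hlen ▸ hj)
  have inj : Set.InjOn w.getVert (Set.Icc 1 4) := hlen ▸ hw.1.getVert_injOn
  refine ⟨_, _, isJoin_pair_pair (a := w.getVert 1) (b := w.getVert 2) (c := w.getVert 3)
    (d := w.getVert 4) ?_ ?_ ?_ ?_ ?_ ?_ (inj.ne ?_ ?_ ?_) (inj.ne ?_ ?_ ?_)⟩ <;> simp [adj]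

theorem WeaklyPolarizable.exists_isModule [Finite V] (h : WeaklyPolarizable G)
    (hG : ¬ Chordal G) : ∃ M, IsModule G M ∧ M.Nontrivial ∧ M ≠ Set.univ := by
  obtain ⟨_, _, hjoin⟩ := h.holeFree.exists_isJoin_of_not_chordal hG
  obtain ⟨A, B, -, -, hmax⟩ := hjoin.exists_isMaxJoin
  have ne_univ {A B : Set V} (hAB : IsJoin G A B) : A ≠ Set.univ := by
    rintro rfl
    obtain ⟨b, hb⟩ := hAB.nontrivial_right.nonempty
    exact hAB.notMem_right (Set.mem_univ b) hb
  by_cases hA : IsModule G A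
  · exact ⟨A, hA, hmax.isJoin.nontrivial_left, ne_univ hmax.isJoin⟩
  by_cases hB : IsModule G B
  · exact ⟨B, hB, hmax.isJoin.nontrivial_right, ne_univ hmax.isJoin.symm⟩
  simp only [IsModule, not_forall, not_not] at hA hB
  obtain ⟨z, hzA, hz⟩ := hA
  obtain ⟨z', hzB', hz'⟩ := hB
  obtain ⟨_, -, _, -, _, -, _, -, hF⟩ := hmax.exists_footedC4 h.not_isHouse hzA hz hzB' hz'
  exact absurd hF (h.not_footedC4 _ _ _ _ _ _)

theorem IsModule.exists_semisimplicial_notMem (hM : IsModule G M) (hnt : M.Nontrivial)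
    (hMV : M ≠ Set.univ) (hKV : K ≠ Set.univ)
    (ih : ∀ T ≠ Set.univ, ¬ T ⊆ K →
      ∃ x, ∃ hx : x ∈ T, x ∉ K ∧ Semisimplicial (G.induce T) ⟨x, hx⟩) :
    ∃ x ∉ K, Semisimplicial G x := by
  have quotient_ne_univ (m : V) : insert m Mᶜ ≠ Set.univ := by
    obtain ⟨m', hm', hne⟩ := hnt.exists_ne m
    exact (Set.ne_univ_iff_exists_notMem _).2 ⟨m', by simp [hm', hne]⟩
  by_cases hMK : M ⊆ K
  · obtain ⟨m, hm⟩ := hnt.nonempty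
    have hQK : ¬ insert m Mᶜ ⊆ K := fun h => hKV <| Set.eq_univ_of_univ_subset <|
      Set.union_compl_self M ▸ Set.union_subset hMK ((Set.subset_insert _ _).trans h)
    obtain ⟨y, rfl | hyM, hyK, hy⟩ := ih _ (quotient_ne_univ m) hQK
    exacts [absurd (hMK hm) hyK, ⟨y, hyK, hM.semisimplicial_of_notMem hm hyM hy⟩]
  · obtain ⟨x, hxM, hxK, hx⟩ := ih M hMV hMK
    obtain ⟨y, rfl | hyM, hyK, hy⟩ := ih _ (quotient_ne_univ x) fun h => hxK (h (.inl rfl))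
    exacts [⟨y, hyK, hM.semisimplicial_of_mem hxM hx hy⟩,
      ⟨y, hyK, hM.semisimplicial_of_notMem hxM hyM hy⟩]

theorem Chordal.exists_semisimplicial_notMem [Finite V] (h : Chordal G) (hK : M3Convex G K)
    (hKV : K ≠ Set.univ) : ∃ x ∉ K, Semisimplicial G x := by
  obtain ⟨x, hxK⟩ := (Set.ne_univ_iff_exists_notMem K).1 hKV
  by_cases hx : Semisimplicial G x
  · exact ⟨x, hxK, hx⟩
  simp only [Semisimplicial, not_forall, not_not] at hx
  obtain ⟨a, b, c, hP⟩ := hx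
  obtain ⟨s, s', w, hs, hs', hw, hlen, hxw⟩ := h.exists_simplicialVtx_path hP
  by_cases hsK : s ∈ K
  · exact ⟨s', fun hs'K => hxK (hK hsK hs'K w ⟨hw, hlen⟩ x hxw), hs'.semisimplicial⟩
  · exact ⟨s, hsK, hs.semisimplicial⟩

theorem WeaklyPolarizable.exists_semisimplicial_notMem [Finite V] (h : WeaklyPolarizable G)
    (hK : M3Convex G K) (hKV : K ≠ Set.univ) : ∃ x ∉ K, Semisimplicial G x := by
  induction hn : Nat.card V using Nat.strong_induction_on generalizing V with
  | _ n ih =>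
    subst hn
    by_cases hG : Chordal G
    · exact hG.exists_semisimplicial_notMem hK hKV
    obtain ⟨M, hM, hnt, hMV⟩ := h.exists_isModule hG
    refine hM.exists_semisimplicial_notMem hnt hMV hKV fun T hT hTK => ?_
    obtain ⟨⟨x, hxT⟩, hxK, hx⟩ := ih _ (Set.ncard_lt_card hT)
      (h.of_embedding (Embedding.induce T)) hK.preimage_val
      (by rwa [Ne, Set.preimage_eq_univ_iff, Subtype.range_coe]) rfl
    exact ⟨x, hxT, hxK, hx⟩

theorem WeaklyPolarizable.isConvexGeometry [Finite V] (h : WeaklyPolarizable G) :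
    IsConvexGeometry (M3Convex G) := by
  refine isConvexGeometry_iff.2 fun S T hS hT hST => ?_
  by_contra hST'
  obtain ⟨⟨x, hxS⟩, hxT, hx⟩ := (h.of_embedding (Embedding.induce S)).exists_semisimplicial_notMem
    hT.preimage_val (by rwa [Ne, Set.preimage_eq_univ_iff, Subtype.range_coe])
  exact hxT (hST (hS.mem_extremeSet_iff.2 ⟨hxS, semisimplicial_induce_iff.1 hx⟩))

end WeaklyPolarizableGraphs

section ForbiddenInConvexGeometries

variable {Cvx : Set V → Prop} {G : SimpleGraph V} {S T K : Set V} {a b c d e f x : V}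

theorem subset_chull : S ⊆ chull Cvx S := Set.subset_sInter fun _ hT => hT.1

theorem extremeSet_chull_subset : extremeSet Cvx (chull Cvx S) ⊆ S := by
  intro x hx
  by_contra hxS
  exact (chull_subset (Set.subset_sdiff_singleton subset_chull hxS) hx.2 hx.1).2 rfl

theorem m3Convex_chull : M3Convex G (chull (M3Convex G) S) :=
  fun _ _ hu hv w hw x hx T hT => hT.2 (hu T hT) (hv T hT) w hw x hx

theorem IsConvexGeometry.subset_of_forall_inducedP4 (hG : IsConvexGeometry (M3Convex G))
    (hK : M3Convex G K)
    (hT : ∀ x ∈ T, x ∈ K ∨ ∃ a ∈ T, ∃ b ∈ T, ∃ c ∈ T, InducedP4 G a x b c) : T ⊆ K := by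
  refine subset_chull.trans (isConvexGeometry_iff.1 hG _ _ m3Convex_chull hK fun x hx => ?_)
  refine (hT x (extremeSet_chull_subset hx)).resolve_right fun ⟨a, ha, b, hb, c, hc, hP⟩ => ?_
  exact (m3Convex_chull.mem_extremeSet_iff.1 hx).2 a (subset_chull ha) b (subset_chull hb) c
    (subset_chull hc) hP

theorem IsConvexGeometry.holeFree (hG : IsConvexGeometry (M3Convex G)) : HoleFree G := by
  rintro ⟨u, w, hw, hlen⟩
  exact hG.subset_of_forall_inducedP4 (T := {x | x ∈ w.support}) m3Convex_empty
    (fun x hx => .inr (hw.exists_inducedP4 hlen hx)) w.start_mem_support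

theorem IsHouse.inducedP4 (h : IsHouse G a b c d e) :
    InducedP4 G e a d c ∧ InducedP4 G e b c d :=
  ⟨⟨h.ae.symm, h.ad, h.cd.symm, mt (·.symm) h.not_de, mt (·.symm) h.not_ce, h.not_ac⟩,
    ⟨h.be.symm, h.bc, h.cd, mt (·.symm) h.not_ce, mt (·.symm) h.not_de, h.not_bd⟩⟩

theorem FootedC4.inducedP4 (h : FootedC4 G a b c d e f) : InducedP4 G a b c e :=
  ⟨h.ab, h.bc, h.ce, h.not_ac, h.not_ae, h.not_be⟩

theorem IsConvexGeometry.not_isHouse (hG : IsConvexGeometry (M3Convex G)) :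
    ¬ IsHouse G a b c d e := by
  intro h
  obtain ⟨hP, hP'⟩ := h.inducedP4
  have hsub : {a, b, c, d, e} ⊆ ({e} : Set V) := by
    refine hG.subset_of_forall_inducedP4 m3Convex_singleton ?_
    rintro x (rfl | rfl | rfl | rfl | rfl)
    · exact .inr ⟨e, by simp, d, by simp, c, by simp, hP⟩
    · exact .inr ⟨e, by simp, c, by simp, d, by simp, hP'⟩
    · exact .inr ⟨d, by simp, b, by simp, e, by simp, hP'.symm⟩
    · exact .inr ⟨c, by simp, a, by simp, e, by simp, hP.symm⟩
    · exact .inl rfl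
  exact h.ae.ne (hsub (Set.mem_insert a _))

theorem IsConvexGeometry.subset_of_footedC4 (hG : IsConvexGeometry (M3Convex G))
    (hK : M3Convex G K) (h : FootedC4 G a b c d e f)
    (hfeet : ¬ G.Adj e f → e ∈ K ∧ f ∈ K) : {a, b, c, d, e, f} ⊆ K := by
  refine hG.subset_of_forall_inducedP4 hK ?_
  have inducedP4_of_adj (hef : G.Adj e f) : InducedP4 G f e c b ∧ InducedP4 G e f d a :=
    ⟨⟨hef.symm, h.ce.symm, h.bc.symm, mt (·.symm) h.not_cf, mt (·.symm) h.not_bf,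
      mt (·.symm) h.not_be⟩, ⟨hef, h.df.symm, h.ad.symm, mt (·.symm) h.not_de,
      mt (·.symm) h.not_ae, mt (·.symm) h.not_af⟩⟩
  rintro x (rfl | rfl | rfl | rfl | rfl | rfl)
  · exact .inr ⟨b, by simp, d, by simp, f, by simp, h.symm.inducedP4⟩
  · exact .inr ⟨a, by simp, c, by simp, e, by simp, h.inducedP4⟩
  · exact .inr ⟨e, by simp, b, by simp, a, by simp, h.inducedP4.symm⟩
  · exact .inr ⟨f, by simp, a, by simp, b, by simp, h.symm.inducedP4.symm⟩
  · exact or_iff_not_imp_left.2 fun hx => ⟨f, by simp, c, by simp, b, by simp,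
      (inducedP4_of_adj (not_not.1 fun hef => hx (hfeet hef).1)).1⟩
  · exact or_iff_not_imp_left.2 fun hx => ⟨e, by simp, d, by simp, a, by simp,
      (inducedP4_of_adj (not_not.1 fun hef => hx (hfeet hef).2)).2⟩

theorem IsConvexGeometry.hhdFree (hG : IsConvexGeometry (M3Convex G)) : HHDFree G where
  holeFree := hG.holeFree
  not_isHouse _ _ _ _ _ := hG.not_isHouse
  not_adj_of_footedC4 h hef :=
    hG.subset_of_footedC4 m3Convex_empty h (absurd hef) (Set.mem_insert _ _)

end ForbiddenInConvexGeometries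

theorem exists_lt_lt_forall_between {P : ℕ → Prop} {k n : ℕ} (hk : P k) (hkn : k ≤ n) (h0 : ¬ P 0)
    (hn : ¬ P n) :
    ∃ l r, l < k ∧ k < r ∧ r ≤ n ∧ ¬ P l ∧ ¬ P r ∧ ∀ i, l < i → i < r → P i := by
  classical
  have hl := Nat.findGreatest_spec (P := fun i => ¬ P i) (Nat.zero_le k) h0
  have hr : ∃ r, k ≤ r ∧ ¬ P r := ⟨n, hkn, hn⟩
  obtain ⟨hkr, hr'⟩ := Nat.find_spec hr
  refine ⟨Nat.findGreatest (fun i => ¬ P i) k, Nat.find hr,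
    (Nat.findGreatest_le k).lt_of_ne fun e => ?_, hkr.lt_of_ne fun e => ?_,
    Nat.find_min' hr ⟨hkn, hn⟩, hl, hr', fun i hli hir => ?_⟩
  · exact absurd hk (by rwa [e] at hl)
  · exact absurd hk (by rwa [← e] at hr')
  · rcases le_total i k with hik | hki
    · exact not_not.1 (Nat.findGreatest_is_greatest hli hik)
    · exact by_contra fun hi => Nat.find_min hr hir ⟨hki, hi⟩

section CriticalJoins

variable {G : SimpleGraph V} {A B K : Set V} {w w' t u v x y z : V}

/-- A maximal join in a graph without holes, houses and dominoes that contains an `A`, such that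
all copies of `A` have the same feet `w` and `w'` and no proper convex set contains both feet. The
convex sets that are minimal among those containing an `A` induce graphs of this kind if they are
convex geometries. -/
structure CriticalJoin (G : SimpleGraph V) (A B : Set V) (w w' : V) : Prop extends HHDFree G where
  isMaxJoin : IsMaxJoin G A B
  splits_left : Splits G w A
  splits_right : Splits G w' B
  notMem_left : w ∉ A
  notMem_right : w' ∉ B
  feet : ∀ {a b c d e f}, FootedC4 G a b c d e f → e = w ∧ f = w' ∨ e = w' ∧ f = w
  eq_univ : ∀ {K}, M3Convex G K → w ∈ K → w' ∈ K → K = Set.univ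

namespace CriticalJoin

theorem symm (h : CriticalJoin G A B w w') : CriticalJoin G B A w' w where
  toHHDFree := h.toHHDFree
  isMaxJoin := h.isMaxJoin.symm
  splits_left := h.splits_right
  splits_right := h.splits_left
  notMem_left := h.notMem_right
  notMem_right := h.notMem_left
  feet hA := (h.feet hA).symm
  eq_univ hK hw hw' := h.eq_univ hK hw' hw

theorem adj (h : CriticalJoin G A B w w') (hx : x ∈ A) (hy : y ∈ B) : G.Adj x y :=
  h.isMaxJoin.isJoin.adj x hx y hy

theorem not_adj_right (h : CriticalJoin G A B w w') (hx : x ∈ B) : ¬ G.Adj w x :=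
  h.isMaxJoin.not_adj_of_splits h.not_isHouse h.notMem_left h.splits_left hx

theorem ne (h : CriticalJoin G A B w w') : w ≠ w' := by
  rintro rfl
  obtain ⟨⟨a, ha, hwa⟩, -⟩ := h.splits_left
  exact h.symm.not_adj_right ha hwa

theorem exists_footedC4 (h : CriticalJoin G A B w w') :
    ∃ a ∈ A, ∃ b ∈ B, ∃ c ∈ A, ∃ d ∈ B, FootedC4 G a b c d w w' :=
  h.isMaxJoin.exists_footedC4 h.not_isHouse h.notMem_left h.splits_left h.notMem_right
    h.splits_right

theorem eq_of_splits (h : CriticalJoin G A B w w') (hzA : z ∉ A) (hz : Splits G z A) : z = w := by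
  obtain ⟨a, -, b, -, c, -, d, -, hA⟩ :=
    h.isMaxJoin.exists_footedC4 h.not_isHouse hzA hz h.notMem_right h.splits_right
  exact (h.feet hA).elim And.left fun e => absurd e.2.symm h.ne

theorem forall_adj_of_adj (h : CriticalJoin G A B w w') (hzA : z ∉ A) (hzw : z ≠ w) (hx : x ∈ A)
    (hzx : G.Adj z x) : ∀ a ∈ A, G.Adj z a :=
  fun a ha => by_contra fun hza => hzw (h.eq_of_splits hzA ⟨⟨x, hx, hzx⟩, a, ha, hza⟩)

theorem forall_adj_right (h : CriticalJoin G A B w w') (hzB : z ∉ B)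
    (hz : ∀ a ∈ A, G.Adj z a) : ∀ b ∈ B, G.Adj z b := by
  by_contra! hb
  obtain ⟨b, hb, hzb⟩ := hb
  obtain ⟨a, ha, hza⟩ := h.isMaxJoin.symm.exists_not_adj_right hzB hb hzb
  exact hza (hz a ha)

theorem adj_of_adj (h : CriticalJoin G A B w w') (hu : ∀ a ∈ A, G.Adj u a)
    (hv : ∀ a ∈ A, G.Adj v a) (huv : ¬ G.Adj u v) (hwu : G.Adj w u) : G.Adj w v := by
  obtain ⟨a, ha, a', ha', hwa, hwa', haa'⟩ :=
    h.isMaxJoin.isJoin.coConnected_left.exists_of_splits h.splits_left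
  by_contra hwv
  exact h.not_isHouse u a v a' w ⟨hu a ha, (hv a ha).symm, hv a' ha', hu a' ha', hwu.symm,
    hwa.symm, huv, haa', mt (·.symm) hwv, mt (·.symm) hwa'⟩

theorem foot_adj (h : CriticalJoin G A B w w') (hu : ∀ a ∈ A, G.Adj u a)
    (hv : ∀ a ∈ A, G.Adj v a) (ht : ∀ a ∈ A, ¬ G.Adj t a) (huv : ¬ G.Adj u v)
    (htu : G.Adj t u) (htv : ¬ G.Adj t v) (htw : t ≠ w') : G.Adj w u ∧ G.Adj w v := by
  obtain ⟨a, ha, a', ha', hwa, hwa', haa'⟩ :=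
    h.isMaxJoin.isJoin.coConnected_left.exists_of_splits h.splits_left
  by_cases hwu : G.Adj w u
  · exact ⟨hwu, h.adj_of_adj hu hv huv hwu⟩
  have hwv : ¬ G.Adj w v := mt (h.adj_of_adj hv hu (mt (·.symm) huv)) hwu
  have hA : FootedC4 G v a' u a t w :=
    ⟨hv a' ha', (hu a' ha').symm, hu a ha, hv a ha, htu.symm, hwa.symm, mt (·.symm) huv,
      mt (·.symm) haa', mt (·.symm) htv, mt (·.symm) (ht a' ha'), mt (·.symm) (ht a ha),
      mt (·.symm) hwv, mt (·.symm) hwa', mt (·.symm) hwu⟩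
  rcases h.feet hA with e | e
  · exact absurd (e.1 ▸ hwa) (ht a ha)
  · exact absurd e.1 htw

theorem not_adj (h : CriticalJoin G A B w w') : ¬ G.Adj w w' := by
  obtain ⟨a, -, b, -, c, -, d, -, hA⟩ := h.exists_footedC4
  exact h.not_adj_of_footedC4 hA

theorem exists_adj_of_adj [Finite V] (h : CriticalJoin G A B w w')
    (huA : ∀ a ∈ A, G.Adj u a) (huB : ∀ b ∈ B, G.Adj u b) (hvA : ∀ a ∈ A, G.Adj v a)
    (hvB : ∀ b ∈ B, G.Adj v b) (huv : ¬ G.Adj u v) (htu : G.Adj t u) (htv : ¬ G.Adj t v) :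
    (∃ a ∈ A, G.Adj t a) ∨ ∃ b ∈ B, G.Adj t b := by
  by_contra! ht
  obtain ⟨⟨a, ha, hwa⟩, -⟩ := h.splits_left
  have htw : t ≠ w := by rintro rfl; exact ht.1 a ha hwa
  have htw' : t ≠ w' := by
    rintro rfl
    obtain ⟨⟨b, hb, hwb⟩, -⟩ := h.splits_right
    exact ht.2 b hb hwb
  obtain ⟨hwu, hwv⟩ := h.foot_adj huA hvA ht.1 huv htu htv htw'
  obtain ⟨hwu', hwv'⟩ := h.symm.foot_adj huB hvB ht.2 huv htu htv htw
  -- The side of a maximal extension of this join that contains both feet is a module, hence convex,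
  -- hence everything.
  have hjoin : IsJoin G {a, w, w'} {u, v} := by
    refine ⟨(coConnected_pair h.not_adj).insert (.inr rfl) (mt (·.symm) (h.symm.not_adj_right ha)),
      coConnected_pair huv, ⟨w, by simp, w', by simp, h.ne⟩,
      Set.nontrivial_pair fun e => htv (e ▸ htu), ?_⟩
    rintro x (rfl | rfl | rfl) y (rfl | rfl)
    exacts [(huA _ ha).symm, (hvA _ ha).symm, hwu, hwv, hwu', hwv']
  obtain ⟨A', B', hA', hB', hmax⟩ := hjoin.exists_isMaxJoin
  have htB' : t ∉ B' := fun htB' =>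
    ht.1 a ha (hmax.isJoin.adj a (hA' (.inl rfl)) t htB').symm
  have hsplits : Splits G t B' := ⟨⟨u, hB' (.inl rfl), htu⟩, v, hB' (.inr rfl), htv⟩
  have hmod : IsModule G A' := by
    intro z hzA' hz
    obtain ⟨a, -, b, -, c, -, d, -, hA⟩ :=
      hmax.exists_footedC4 h.not_isHouse hzA' hz htB' hsplits
    exact (h.feet hA).elim (fun e => htw' e.2) fun e => htw e.2
  have huA' : u ∈ A' := by
    rw [h.eq_univ hmod.m3Convex (hA' (by simp)) (hA' (by simp))]
    trivial
  exact hmax.isJoin.notMem_right huA' (hB' (.inl rfl))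

theorem adj_foot_of_inducedP4 [Finite V] (h : CriticalJoin G A B w w') (hP : InducedP4 G t u x v)
    (hx : x ∈ A \ G.neighborSet w) (hu : u ∉ A) (hv : v ∉ A) :
    G.Adj w' u ∧ v ∈ B \ G.neighborSet w' := by
  obtain ⟨htu, hux, hxv, htx, htv, huv⟩ := hP
  have complete {y : V} (hy : y ∉ A) (hyx : G.Adj y x) : ∀ a ∈ A, G.Adj y a :=
    h.forall_adj_of_adj hy (fun e => hx.2 (e ▸ hyx)) hx.1 hyx
  have huA := complete hu hux
  have hvA := complete hv hxv.symm
  have htA : t ∉ A := fun ht => htv (hvA t ht).symm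
  have hvB : v ∈ B := by
    by_contra hvB
    have hvB' := h.forall_adj_right hvB hvA
    have huB : u ∉ B := fun huB => huv (hvB' u huB).symm
    have huB' := h.forall_adj_right huB huA
    have htB : t ∉ B := fun ht => htv (hvB' t ht).symm
    rcases h.exists_adj_of_adj huA huB' hvA hvB' huv htu htv with ⟨a, ha, hta⟩ | ⟨b, hb, htb⟩
    · by_cases htw : t = w
      · exact htv (htw ▸ h.adj_of_adj huA hvA huv (htw ▸ htu))
      · exact htx (h.forall_adj_of_adj htA htw ha hta x hx.1)
    · by_cases htw : t = w'
      · exact htv (htw ▸ h.symm.adj_of_adj huB' hvB' huv (htw ▸ htu))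
      · exact htx (h.symm.forall_adj_right htA (h.symm.forall_adj_of_adj htB htw hb htb) x hx.1)
  have huB : u ∈ B := by
    by_contra huB
    exact huv (h.forall_adj_right huB huA v hvB)
  have htB : t ∉ B := fun ht => htx (h.adj hx.1 ht).symm
  obtain rfl := h.symm.eq_of_splits htB ⟨⟨u, huB, htu⟩, v, hvB, htv⟩
  exact ⟨htu, hvB, htv⟩

theorem start_mem_of_inducedP4 (h : CriticalJoin G A B w w') (hP : InducedP4 G t u x v)
    (hu : u ∈ A) (hx : x ∈ A \ G.neighborSet w) (hwu : G.Adj w u) (hwv : G.Adj w v) :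
    t ∈ A \ G.neighborSet w := by
  obtain ⟨htu, hux, hxv, htx, htv, huv⟩ := hP
  refine ⟨?_, fun hwt : G.Adj w t => ?_⟩
  · by_contra ht
    obtain rfl := h.eq_of_splits ht ⟨⟨u, hu, htu⟩, x, hx.1, htx⟩
    exact htv hwv
  · exact h.not_isHouse w u x v t ⟨hwu, hux, hxv, hwv, hwt, htu.symm, hx.2, huv,
      mt (·.symm) htx, mt (·.symm) htv⟩

theorem mem_of_getVert_mem [Finite V] (h : CriticalJoin G A B w w') {p : G.Walk y z}
    (hp : IsInducedPathW G p) (hlen : 3 ≤ p.length) (hy : y ∉ B \ G.neighborSet w')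
    (hz : z ∉ B \ G.neighborSet w') {i : ℕ} (hi : i + 2 ≤ p.length)
    (hmem : p.getVert (i + 1) ∈ A \ G.neighborSet w) :
    p.getVert i ∈ A ∨ p.getVert (i + 2) ∈ A := by
  by_contra! hA
  have hleft (h0 : i ≠ 0) :
      G.Adj w' (p.getVert i) ∧ p.getVert (i + 2) ∈ B \ G.neighborSet w' := by
    obtain ⟨i, rfl⟩ := Nat.exists_eq_succ_of_ne_zero h0
    exact h.adj_foot_of_inducedP4 (hp.inducedP4_getVert hi) hmem hA.1 hA.2
  have hright (hlt : i + 3 ≤ p.length) :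
      G.Adj w' (p.getVert (i + 2)) ∧ p.getVert i ∈ B \ G.neighborSet w' :=
    h.adj_foot_of_inducedP4 (hp.inducedP4_getVert hlt).symm hmem hA.2 hA.1
  rcases eq_or_ne i 0 with rfl | h0
  · exact hy (by simpa using (hright hlen).2)
  · by_cases hlt : i + 3 ≤ p.length
    · exact (hleft h0).2.2 (hright hlt).1
    · obtain hend : i + 2 = p.length := by omega
      exact hz (by simpa [hend] using (hleft h0).2)

theorem mem_or_forall_adj (h : CriticalJoin G A B w w') (hx : x ∈ A \ G.neighborSet w)
    (hy : y ∉ A \ G.neighborSet w) (hyx : G.Adj y x) :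
    y ∈ A ∩ G.neighborSet w ∨ ∀ a ∈ A, G.Adj y a := by
  by_cases hyA : y ∈ A
  · exact .inl ⟨hyA, by_contra fun hyw => hy ⟨hyA, hyw⟩⟩
  · exact .inr (h.forall_adj_of_adj hyA (fun e => hx.2 (e ▸ hyx)) hx.1 hyx)

/-- The vertices left when the nonneighbors of either foot are removed from the corresponding side
of the join. -/
def core (G : SimpleGraph V) (A B : Set V) (w w' : V) : Set V :=
  (A \ G.neighborSet w ∪ B \ G.neighborSet w')ᶜ

theorem core_comm : core G B A w' w = core G A B w w' := by
  rw [core, core, Set.union_comm]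

theorem exists_getVert_mem [Finite V] (h : CriticalJoin G A B w w') {p : G.Walk y z}
    (hp : IsInducedPathW G p) (hlen : 3 ≤ p.length) (hy : y ∈ core G A B w w')
    (hz : z ∈ core G A B w w') {k : ℕ} (hk : k ≤ p.length)
    (hkmem : p.getVert k ∈ A \ G.neighborSet w) :
    ∃ i, k = i + 1 ∧ i + 2 ≤ p.length ∧ p.getVert i ∈ A ∩ G.neighborSet w ∧
      p.getVert (i + 2) ∈ A ∩ G.neighborSet w := by
  rw [core, Set.compl_union] at hy hz
  obtain ⟨l, r, hlk, hkr, hr, hlmem, hrmem, hmem⟩ := exists_lt_lt_forall_between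
    (P := fun i => p.getVert i ∈ A \ G.neighborSet w) hkmem hk (by simpa using hy.1)
    (by simpa using hz.1)
  have adj_iff {i j : ℕ} (hi : i ≤ r) (hj : j ≤ r) := hp.adj_getVert_iff (hi.trans hr) (hj.trans hr)
  have hlast := hmem (r - 1) (by omega) (by omega)
  have hfirst := hmem (l + 1) (by omega) (by omega)
  have hl := h.mem_or_forall_adj hfirst hlmem ((adj_iff (by omega) (by omega)).2 (by omega))
  have hr' := h.mem_or_forall_adj hlast hrmem ((adj_iff (by omega) (by omega)).2 (by omega))
  have hlr : ¬ G.Adj (p.getVert l) (p.getVert r) := by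
    rw [adj_iff (by omega) le_rfl]
    omega
  rcases hl with hl | hl <;> rcases hr' with hr' | hr'
  · have := h.holeFree.le_add_two_of_adj_getVert hp hr hl.2 hr'.2 fun i hli hir =>
      (hmem i hli hir).2
    obtain rfl : r = l + 2 := by omega
    exact ⟨l, by omega, hr, hl, hr'⟩
  · exact absurd (hr' _ hl.1).symm hlr
  · exact absurd (hl _ hr'.1) hlr
  · have := hl _ hlast.1
    rw [adj_iff (by omega) (by omega)] at this
    obtain rfl : r = l + 2 := by omega
    rcases h.mem_of_getVert_mem hp hlen hy.2 hz.2 hr hfirst with hA | hA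
    exacts [absurd (hr' _ hA).symm hlr, absurd (hl _ hA) hlr]

theorem le_one_of_getVert_mem [Finite V] (h : CriticalJoin G A B w w') {p : G.Walk y z}
    (hp : IsInducedPathW G p) (hlen : 3 ≤ p.length) (hy : y ∈ core G A B w w')
    (hz : z ∈ core G A B w w') {k : ℕ} (hk : k ≤ p.length)
    (hkmem : p.getVert k ∈ A \ G.neighborSet w) : k ≤ 1 := by
  by_contra! h1
  obtain ⟨i, rfl⟩ := Nat.exists_eq_add_of_lt h1
  obtain ⟨j, hj, hk', hu, hv⟩ := h.exists_getVert_mem hp hlen hy hz hk hkmem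
  obtain rfl : j = i + 1 := by omega
  have hP := hp.inducedP4_getVert (i := i) (by omega)
  rw [show 1 + i + 1 = i + 2 by omega] at hkmem
  have hmem := h.start_mem_of_inducedP4 hP hu.1 hkmem hu.2 hv.2
  obtain ⟨j, rfl, -, hs, -⟩ := h.exists_getVert_mem hp hlen hy hz (by omega) hmem
  have not_adj {m n : ℕ} (hm : m ≤ j + 4) (hn : n ≤ j + 4) (hmn : n + 1 < m) :
      ¬ G.Adj (p.getVert m) (p.getVert n) := by
    rw [hp.adj_getVert_iff (by omega) (by omega)]
    omega
  obtain ⟨htu, hux, hxv, -, -, huv⟩ := hP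
  have hA : FootedC4 G (p.getVert (j + 3)) (p.getVert (j + 4)) w (p.getVert (j + 2))
      (p.getVert j) (p.getVert (j + 1)) :=
    ⟨hxv, hv.2.symm, hu.2, hux.symm, hs.2, htu.symm, mt (·.symm) hkmem.2, mt (·.symm) huv,
      not_adj (by omega) (by omega) (by omega), not_adj (by omega) (by omega) (by omega),
      not_adj (by omega) (by omega) (by omega), not_adj (by omega) (by omega) (by omega),
      not_adj (by omega) (by omega) (by omega), hmem.2⟩
  exact h.not_adj_of_footedC4 hA (p.adj_getVert_succ (by omega))

theorem getVert_notMem [Finite V] (h : CriticalJoin G A B w w') {p : G.Walk y z}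
    (hp : IsInducedPathW G p) (hlen : 3 ≤ p.length) (hy : y ∈ core G A B w w')
    (hz : z ∈ core G A B w w') {k : ℕ} (hk : k ≤ p.length) :
    p.getVert k ∉ A \ G.neighborSet w := by
  intro hmem
  have hk1 := h.le_one_of_getVert_mem hp hlen hy hz hk hmem
  have hrev := h.le_one_of_getVert_mem hp.reverse (k := p.length - k) (by simpa) hz hy (by simp)
    (by rwa [Walk.getVert_reverse, Nat.sub_sub_self hk])
  omega

theorem m3Convex_core [Finite V] (h : CriticalJoin G A B w w') :
    M3Convex G (core G A B w w') := by
  rintro y z hy hz p ⟨hp, hlen⟩ x hx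
  obtain ⟨k, rfl, hk⟩ := Walk.mem_support_iff_exists_getVert.1 hx
  rintro (hk' | hk')
  · exact h.getVert_notMem hp hlen hy hz hk hk'
  · rw [← core_comm] at hy hz
    exact h.symm.getVert_notMem hp hlen hy hz hk hk'

theorem foot_mem_core (h : CriticalJoin G A B w w') : w ∈ core G A B w w' := by
  rintro (hw | hw)
  · exact h.notMem_left hw.1
  · obtain ⟨-, a, ha, hwa⟩ := h.splits_left
    exact hwa (h.adj ha hw.1).symm

end CriticalJoin

theorem not_criticalJoin [Finite V] : ¬ CriticalJoin G A B w w' := by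
  intro h
  have hcore := h.eq_univ h.m3Convex_core h.foot_mem_core
    (CriticalJoin.core_comm ▸ h.symm.foot_mem_core)
  obtain ⟨-, a, ha, hwa⟩ := h.splits_left
  have : a ∈ CriticalJoin.core G A B w w' := hcore ▸ Set.mem_univ a
  exact this (.inl ⟨ha, hwa⟩)

theorem IsConvexGeometry.extremeSet_univ_eq (hG : IsConvexGeometry (M3Convex G))
    {a b c d e f : V} (hA : FootedC4 G a b c d e f)
    (huniv : ∀ {K}, M3Convex G K → e ∈ K → f ∈ K → K = Set.univ) :
    extremeSet (M3Convex G) Set.univ = {e, f} := by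
  have hsub : extremeSet (M3Convex G) Set.univ ⊆ {e, f} := by
    rw [← huniv (m3Convex_chull (S := {e, f})) (subset_chull (by simp)) (subset_chull (by simp))]
    exact extremeSet_chull_subset
  have not_subset_singleton (x : V) : ¬ extremeSet (M3Convex G) Set.univ ⊆ {x} := fun hx => by
    have := isConvexGeometry_iff.1 hG _ _ m3Convex_univ m3Convex_singleton hx
    exact hA.ab.ne ((this (Set.mem_univ a)).trans (this (Set.mem_univ b)).symm)
  rcases Set.subset_pair_iff_eq.1 hsub with he | he | he | he
  · exact absurd (he ▸ Set.empty_subset _) (not_subset_singleton a)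
  · exact absurd he.subset (not_subset_singleton e)
  · exact absurd he.subset (not_subset_singleton f)
  · exact he

end CriticalJoins

section MinimalConvexSets

variable {G : SimpleGraph V} {S : Set V} {a b c d e f : V}

/-- `S` contains the six vertices of a footed 4-cycle. -/
def ContainsFootedC4 (G : SimpleGraph V) (S : Set V) : Prop :=
  ∃ a b c d e f, FootedC4 G a b c d e f ∧ {a, b, c, d, e, f} ⊆ S

theorem containsFootedC4_image_val {T : Set S} :
    ContainsFootedC4 G (Subtype.val '' T) ↔ ContainsFootedC4 (G.induce S) T := by
  constructor
  · rintro ⟨a, b, c, d, e, f, hA, hsub⟩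
    simp only [Set.insert_subset_iff, Set.singleton_subset_iff] at hsub
    obtain ⟨⟨a, ha, rfl⟩, ⟨b, hb, rfl⟩, ⟨c, hc, rfl⟩, ⟨d, hd, rfl⟩, ⟨e, he, rfl⟩,
      ⟨f, hf, rfl⟩⟩ := hsub
    exact ⟨a, b, c, d, e, f, (FootedC4.map_iff (Embedding.induce S)).1 hA,
      by simp only [Set.insert_subset_iff, Set.singleton_subset_iff]; tauto⟩
  · rintro ⟨a, b, c, d, e, f, hA, hsub⟩
    refine ⟨a, b, c, d, e, f, (FootedC4.map_iff (Embedding.induce S)).2 hA, ?_⟩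
    simpa [Set.image_insert_eq] using Set.image_mono (f := Subtype.val) hsub

theorem IsConvexGeometry.exists_criticalJoin [Finite V] (hG : IsConvexGeometry (M3Convex G))
    (hmin : ∀ K, M3Convex G K → ContainsFootedC4 G K → K = Set.univ)
    (hA : FootedC4 G a b c d e f) : ∃ A B, CriticalJoin G A B e f := by
  have huniv {a b c d e f : V} (hA : FootedC4 G a b c d e f) {K : Set V} (hK : M3Convex G K)
      (he : e ∈ K) (hf : f ∈ K) : K = Set.univ :=
    hmin K hK ⟨a, b, c, d, e, f, hA, hG.subset_of_footedC4 hK hA fun _ => ⟨he, hf⟩⟩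
  have hne {i j : Fin 6} (hij : i ≠ j) := hA.injective.ne hij
  obtain ⟨A, B, hac, hbd, hmax⟩ := (isJoin_pair_pair hA.ab hA.bc hA.cd hA.ad hA.not_ac hA.not_bd
    (hne (i := 0) (j := 2) (by decide)) (hne (i := 1) (j := 3) (by decide))).exists_isMaxJoin
  have ha : a ∈ A := hac (by simp)
  have hb : b ∈ B := hbd (by simp)
  refine ⟨A, B, hG.hhdFree, hmax, ⟨⟨c, hac (by simp), hA.ce.symm⟩, a, ha, mt (·.symm) hA.not_ae⟩,
    ⟨⟨d, hbd (by simp), hA.df.symm⟩, b, hb, mt (·.symm) hA.not_bf⟩,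
    fun he => hA.not_be (hmax.isJoin.adj e he b hb).symm,
    fun hf => hA.not_af (hmax.isJoin.adj a ha f hf), fun hA' => ?_, huniv hA⟩
  rw [← Set.pair_eq_pair_iff, ← hG.extremeSet_univ_eq hA (huniv hA),
    ← hG.extremeSet_univ_eq hA' (huniv hA')]

theorem IsConvexGeometry.not_footedC4 [Finite V] (hG : IsConvexGeometry (M3Convex G)) :
    ¬ FootedC4 G a b c d e f := by
  intro hA
  obtain ⟨S, ⟨hS, hSA⟩, hmin⟩ := Set.toFinite {S | M3Convex G S ∧ ContainsFootedC4 G S}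
    |>.exists_minimal ⟨Set.univ, m3Convex_univ, a, b, c, d, e, f, hA, Set.subset_univ _⟩
  rw [← Subtype.coe_image_univ S, containsFootedC4_image_val] at hSA
  obtain ⟨a, b, c, d, e, f, hA, -⟩ := hSA
  have eq_univ (K : Set S) (hK : M3Convex (G.induce S) K)
      (hKA : ContainsFootedC4 (G.induce S) K) : K = Set.univ := by
    have hle := hmin ⟨hS.induce_iff.1 hK, containsFootedC4_image_val.2 hKA⟩
      (Subtype.coe_image_subset S K)
    exact Set.eq_univ_of_forall fun x => Subtype.val_injective.mem_set_image.1 (hle x.2)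
  obtain ⟨A, B, hAB⟩ := (hG.induce hS).exists_criticalJoin eq_univ hA
  exact not_criticalJoin hAB

theorem IsConvexGeometry.weaklyPolarizable [Finite V] (hG : IsConvexGeometry (M3Convex G)) :
    WeaklyPolarizable G where
  toHHDFree := hG.hhdFree
  not_footedC4 _ _ _ _ _ _ := hG.not_footedC4

end MinimalConvexSets

theorem m3_convex_geometry_iff_weakly_polarizable_general {V : Type*} [Finite V]
    (G : SimpleGraph V) :
    IsConvexGeometry (PConvex G (fun _ _ w => IsInducedPathW G w ∧ 3 ≤ w.length)) ↔
      ((¬ ∃ (u : V) (w : G.Walk u u), IsInducedCycleW G w ∧ 5 ≤ w.length) ∧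
        ¬ HasInducedSubgraphIso G houseGraph ∧
        ¬ HasInducedSubgraphIso G dominoGraph ∧
        ¬ HasInducedSubgraphIso G aGraph) :=
  Iff.trans ⟨IsConvexGeometry.weaklyPolarizable, WeaklyPolarizable.isConvexGeometry⟩
    weaklyPolarizable_iff

/-- A finite connected simple graph `G` is a convex geometry with respect to
the m³-convexity iff `G` is weakly polarizable (no hole, house, domino, or A). -/
theorem m3_convex_geometry_iff_weakly_polarizable
    {V : Type*} [Fintype V] (G : SimpleGraph V) (hconn : G.Connected) :
    IsConvexGeometry (PConvex G (fun _ _ w => IsInducedPathW G w ∧ 3 ≤ w.length)) ↔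
      ((¬ ∃ (u : V) (w : G.Walk u u), IsInducedCycleW G w ∧ 5 ≤ w.length) ∧
        ¬ HasInducedSubgraphIso G houseGraph ∧
        ¬ HasInducedSubgraphIso G dominoGraph ∧
        ¬ HasInducedSubgraphIso G aGraph) :=
  m3_convex_geometry_iff_weakly_polarizable_general G
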